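/- arXiv:2403.17953 — 4 statements merged into one kernel-verified Lean document; each statement's English description precedes it below -/
import Mathlib

section
/- The only solutions in nonnegative integers (n, x, y) with n ≠ 1 of the equation T_n = 2^x · 3^y are (n, x, y) = (2, 0, 0), (3, 1, 0), (4, 2, 0), (7, 3, 1) and (9, 0, 4); equivalently, 0 = T_2 − 2^0·3^0 = T_3 − 2^1·3^0 = T_4 − 2^2·3^0 = T_7 − 2^3·3^1 = T_9 − 2^0·3^4 are the only representations of 0 in the form T_n − 2^x·3^y. -/
/-!
The proof is `p`-adic. The Tribonacci sequence extended to negative indices vanishes at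
`0, -1, -4, -17`, and for `p = 2, 3` these zeros account for all large `p`-adic valuations
of `T n`. Concretely, let `M` be the companion matrix. For `p = 2` take the period `P = 32`, with
`M ^ P ≡ 1` modulo `2 ^ 4`; for `p = 3` take `P = 351`, with `M ^ P ≡ 1` modulo `3 ^ 4`.

* If `n + c = P * p ^ k * m` with `c ∈ {0, 1, 4, 17}` and `p ∤ m`, then lifting the exponent
  (`pow_level`) gives `M ^ (n + c) = 1 + p ^ (j + k) * (m * B + p ^ s * C)`, where
  `M ^ P = 1 + p ^ j * B`; reading off one coordinate, the valuation of `T n` is less than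
  `j + k + s` (`not_dvd_near_zero`). Hence the `p`-part of `T n` is `O(n)`.
* For all other residues of `n` modulo `P`, a finite check combined with the congruence
  `T (r + P N) ≡ T r + N (T (r + P) - T r)` modulo `p ^ (2 j)` bounds the valuation
  of `T n` by a constant.

So `T n = 2 ^ x * 3 ^ y` forces `T n = O(n ^ 2)`, which contradicts the exponential growth of `T`
once `n ≥ 30`; the remaining cases are checked directly.
-/

/-- The Tribonacci sequence: `T 0 = 0`, `T 1 = T 2 = 1`,
`T (n+3) = T (n+2) + T (n+1) + T n`. -/
def T : ℕ → ℤ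
  | 0 => 0
  | 1 => 1
  | 2 => 1
  | n + 3 => T (n + 2) + T (n + 1) + T n

namespace Tribonacci

lemma T_add_three (n : ℕ) : T (n + 3) = T (n + 2) + T (n + 1) + T n := by
  rw [T]

/-- The companion matrix of the Tribonacci recurrence; it shifts
`(T n, T (n + 1), T (n + 2))` by one index. -/
def M : Matrix (Fin 3) (Fin 3) ℤ := !![0, 1, 0; 0, 0, 1; 1, 1, 1]

/-- The state vector of the sequence at index `n`. -/
def state (n : ℕ) : Fin 3 → ℤ := ![T n, T (n + 1), T (n + 2)]

/-- The state vector of the Tribonacci sequence extended to index `-c`, for the four zeros `-c`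
of that extension. Only the values at `c = 0, 1, 4, 17` are meaningful. -/
def zeroState (c : ℕ) : Fin 3 → ℤ :=
  if c = 0 then ![0, 1, 1] else if c = 1 then ![0, 0, 1]
  else if c = 4 then ![0, -1, 1] else ![0, 56, -47]

open Matrix

lemma M_mulVec_state (n : ℕ) : M *ᵥ state n = state (n + 1) := by
  ext i
  fin_cases i <;> simp [M, state, Matrix.mulVec, dotProduct, Fin.sum_univ_three, T_add_three]
  ring

lemma M_pow_mulVec_state (i n : ℕ) : M ^ i *ᵥ state n = state (n + i) := by
  induction i with
  | zero => simp
  | succ i ih =>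
    rw [pow_succ', ← Matrix.mulVec_mulVec, ih, M_mulVec_state]
    rfl

lemma M_pow_mulVec_zeroState {c : ℕ} (hc : c ∈ [0, 1, 4, 17]) :
    M ^ c *ᵥ zeroState c = state 0 := by
  have h0 : state 0 = ![0, 1, 1] := by decide
  have step : ∀ a b d : ℤ, M *ᵥ ![a, b, d] = ![b, d, a + b + d] := by
    intro a b d
    ext i
    fin_cases i <;> simp [M, Matrix.mulVec, dotProduct, Fin.sum_univ_three]
  rw [h0]
  simp only [List.mem_cons, List.not_mem_nil, or_false] at hc
  rcases hc with rfl | rfl | rfl | rfl <;>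
    simp [zeroState, pow_succ, ← Matrix.mulVec_mulVec, step]

lemma zeroState_zero (c : ℕ) : zeroState c 0 = 0 := by
  unfold zeroState
  split_ifs <;> rfl

lemma T_eq_of_zeroState {c : ℕ} (hc : c ∈ [0, 1, 4, 17]) (n : ℕ) :
    T n = (M ^ (n + c) *ᵥ zeroState c) 0 := by
  rw [pow_add, ← Matrix.mulVec_mulVec, M_pow_mulVec_zeroState hc, M_pow_mulVec_state]
  simp [state]

lemma M_pow_add_three (n : ℕ) : M ^ (n + 3) =
    !![T (n + 1), T (n + 1) + T n, T (n + 2);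
       T (n + 2), T (n + 2) + T (n + 1), T (n + 3);
       T (n + 3), T (n + 3) + T (n + 2), T (n + 4)] := by
  induction n with
  | zero => decide
  | succ n ih =>
    rw [show n + 1 + 3 = (n + 3) + 1 by ring, pow_succ', ih]
    ext i k
    fin_cases i <;> fin_cases k <;>
      simp [M, Matrix.mul_apply, Fin.sum_univ_three, T_add_three] <;> ring

/-- A sufficient condition, in terms of `T`, for `M ^ (n + 3)` to be `1` modulo `q`. -/
lemma exists_M_pow_eq {n : ℕ} {q : ℤ} (h1 : q ∣ T (n + 1) - 1) (h0 : q ∣ T n + 1)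
    (h2 : q ∣ T (n + 2)) : ∃ B, M ^ (n + 3) = 1 + q • B := by
  obtain ⟨a, ha⟩ := h1
  obtain ⟨b, hb⟩ := h0
  obtain ⟨c, hc⟩ := h2
  refine ⟨!![a, a + b, c; c, c + a, c + a + b; c + a + b, c + a + b + c, c + a + b + c + a], ?_⟩
  have h1 : T (n + 1) = 1 + q * a := by linarith
  have h0 : T n = -1 + q * b := by linarith
  rw [M_pow_add_three]
  have h4 : T (n + 4) = T (n + 3) + T (n + 2) + T (n + 1) := T_add_three (n + 1)
  rw [h4, T_add_three, hc, h1, h0]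
  ext i k
  fin_cases i <;> fin_cases k <;> simp <;> ring

section Ring

variable {R : Type*} [Ring R]

lemma one_add_smul_pow (q : ℤ) (X : R) (N : ℕ) :
    ∃ Y : R, (1 + q • X) ^ N = 1 + (N * q) • X + q ^ 2 • Y := by
  induction N with
  | zero => exact ⟨0, by simp⟩
  | succ N ih =>
    obtain ⟨Y, hY⟩ := ih
    refine ⟨Y + (N : ℤ) • (X * X) + q • (X * Y), ?_⟩
    rw [pow_succ', hY]
    simp only [add_mul, mul_add, one_mul, mul_one, smul_add, smul_smul,
      smul_mul_assoc, mul_smul_comm]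
    push_cast
    module

/-- One lifting step at `p` from level `j` on: a `p`-th power raises the level by one and leaves
the leading coefficient unchanged modulo `p ^ s`. The exponent `e` is `p` as a natural number. -/
def Lifts (R : Type*) [Ring R] (p : ℤ) (e j s : ℕ) : Prop :=
  ∀ i, j ≤ i → ∀ X : R, ∃ Y : R, (1 + p ^ i • X) ^ e = 1 + p ^ (i + 1) • (X + p ^ s • Y)

lemma lifts_two : Lifts R 2 2 4 3 := by
  intro i hi X
  obtain ⟨d, rfl⟩ := Nat.exists_eq_add_of_le hi
  refine ⟨(2 ^ d : ℤ) • (X * X), ?_⟩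
  rw [pow_two]
  simp only [add_mul, mul_add, one_mul, mul_one, smul_mul_smul_comm, smul_add, smul_smul]
  module

lemma lifts_three : Lifts R 3 3 4 4 := by
  intro i hi X
  obtain ⟨d, rfl⟩ := Nat.exists_eq_add_of_le hi
  refine ⟨(3 ^ d : ℤ) • (X * X) + (3 ^ (3 + 2 * d) : ℤ) • (X * X * X), ?_⟩
  rw [pow_succ, pow_two]
  simp only [add_mul, mul_add, one_mul, mul_one, smul_add, smul_smul,
    smul_mul_assoc, mul_smul_comm]
  module

/-- Lifting the exponent: if `A = 1 + p ^ j * B`, then `A ^ (p ^ k * m)` equals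
`1 + m * p ^ (j + k) * B` up to a multiple of `p ^ (j + k + s)`. -/
lemma pow_level {p : ℕ} {j s : ℕ} (hjs : s ≤ j) (hL : Lifts R p p j s) {A B : R}
    (hA : A = 1 + (p ^ j : ℤ) • B) (k m : ℕ) :
    ∃ C : R, A ^ (p ^ k * m) = 1 + (p ^ (j + k) : ℤ) • ((m : ℤ) • B + (p ^ s : ℤ) • C) := by
  have key : ∃ C : R, A ^ (p ^ k) = 1 + (p ^ (j + k) : ℤ) • (B + (p ^ s : ℤ) • C) := by
    induction k with
    | zero => exact ⟨0, by simp [hA]⟩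
    | succ k ih =>
      obtain ⟨C, hC⟩ := ih
      obtain ⟨Y, hY⟩ := hL (j + k) (by omega) (B + (p ^ s : ℤ) • C)
      refine ⟨C + Y, ?_⟩
      rw [pow_succ, pow_mul, hC, hY]
      simp only [← add_assoc, smul_add]
  obtain ⟨C, hC⟩ := key
  obtain ⟨Y, hY⟩ := one_add_smul_pow (p ^ (j + k) : ℤ) (B + (p ^ s : ℤ) • C) m
  obtain ⟨d, rfl⟩ := Nat.exists_eq_add_of_le hjs
  refine ⟨(m : ℤ) • C + (p ^ (d + k) : ℤ) • Y, ?_⟩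
  rw [pow_mul, hC, hY]
  simp only [smul_add, smul_smul]
  module

end Ring

/-- Near a zero `-c` of the extended sequence the `p`-adic valuation of `T n` is controlled by that
of `n + c`. The hypothesis `hb` says that the derivative at the zero has valuation below `s`. -/
lemma not_dvd_near_zero {p : ℕ} (hp : p.Prime) {j s P : ℕ} (hjs : s ≤ j)
    (hL : Lifts (Matrix (Fin 3) (Fin 3) ℤ) p p j s)
    (hP : ∃ B, M ^ P = 1 + (p ^ j : ℤ) • B) {c : ℕ} (hc : c ∈ [0, 1, 4, 17]) (hcP : c ≤ P)
    (hb : ¬ (p ^ (j + s) : ℤ) ∣ T (P - c)) {n k m : ℕ} (hn : n + c = P * (p ^ k * m))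
    (hm : ¬ p ∣ m) : ¬ (p ^ (j + k + s) : ℤ) ∣ T n := by
  obtain ⟨B, hB⟩ := hP
  obtain ⟨C, hC⟩ := pow_level hjs hL hB k m
  have hp0 : (p : ℤ) ≠ 0 := by exact_mod_cast hp.ne_zero
  have hTn := T_eq_of_zeroState hc n
  have hTP := T_eq_of_zeroState hc (P - c)
  rw [hn, pow_mul, hC] at hTn
  rw [Nat.sub_add_cancel hcP, hB] at hTP
  simp only [Matrix.add_mulVec, Matrix.one_mulVec, Matrix.smul_mulVec, Pi.add_apply,
    Pi.smul_apply, zeroState_zero, zero_add, smul_eq_mul] at hTn hTP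
  rw [hTn, pow_add _ (j + k), mul_dvd_mul_iff_left (pow_ne_zero _ hp0)]
  rw [hTP, pow_add, mul_dvd_mul_iff_left (pow_ne_zero _ hp0)] at hb
  intro h
  rw [dvd_add_left (dvd_mul_right _ _)] at h
  have hcop : IsCoprime ((p : ℤ) ^ s) (m : ℤ) := by
    apply IsCoprime.pow_left
    exact Nat.isCoprime_iff_coprime.mpr ((Nat.Prime.coprime_iff_not_dvd hp).mpr hm)
  exact hb (hcop.dvd_of_dvd_mul_left h)

/-- The resulting linear bound for the `p`-part of `T n` near a zero. -/
lemma pow_le_near_zero {p : ℕ} (hp : p.Prime) {j s P : ℕ} (hjs : s ≤ j)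
    (hL : Lifts (Matrix (Fin 3) (Fin 3) ℤ) p p j s)
    (hP : ∃ B, M ^ P = 1 + (p ^ j : ℤ) • B) {c : ℕ} (hc : c ∈ [0, 1, 4, 17]) (hcP : c ≤ P)
    (hb : ¬ (p ^ (j + s) : ℤ) ∣ T (P - c)) {n x : ℕ} (hn : P ∣ n + c) (hn0 : 0 < n)
    (hx : (p ^ x : ℤ) ∣ T n) : P * p ^ x ≤ p ^ (j + s - 1) * (n + 17) := by
  obtain ⟨N, hN⟩ := hn
  have hN0 : N ≠ 0 := by
    rintro rfl
    omega
  obtain ⟨k, m, hm, rfl⟩ := Nat.exists_eq_pow_mul_and_not_dvd hN0 p hp.ne_one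
  have h := not_dvd_near_zero hp hjs hL hP hc hcP hb hN hm
  have hxk : x ≤ (j + s - 1) + k := by
    by_contra! hlt
    exact h ((pow_dvd_pow _ (by omega)).trans hx)
  have hm0 : 0 < m := Nat.pos_of_ne_zero (by rintro rfl; simp at hm)
  have hc17 : c ≤ 17 := by
    simp only [List.mem_cons, List.not_mem_nil, or_false] at hc
    omega
  calc P * p ^ x ≤ P * p ^ ((j + s - 1) + k) := by gcongr; exact hp.one_lt.le
    _ = p ^ (j + s - 1) * (P * (p ^ k * 1)) := by ring
    _ ≤ p ^ (j + s - 1) * (P * (p ^ k * m)) := by gcongr; omega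
    _ = p ^ (j + s - 1) * (n + c) := by rw [hN]
    _ ≤ _ := by gcongr

/-- If `M ^ P ≡ 1` modulo `q`, then `N ↦ T (r + P N)` is affine modulo `q ^ 2`. -/
lemma T_add_mul {P : ℕ} {q : ℤ} (hP : ∃ B, M ^ P = 1 + q • B) (r N : ℕ) :
    q ∣ T (r + P) - T r ∧ q ^ 2 ∣ T (r + P * N) - (T r + N * (T (r + P) - T r)) := by
  obtain ⟨B, hB⟩ := hP
  obtain ⟨Y, hY⟩ := one_add_smul_pow q B N
  have h1 : T (r + P) = (M ^ P *ᵥ state r) 0 := by rw [M_pow_mulVec_state]; rfl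
  have h2 : T (r + P * N) = (M ^ (P * N) *ᵥ state r) 0 := by rw [M_pow_mulVec_state]; rfl
  have h3 : state r 0 = T r := rfl
  rw [pow_mul, hB, hY] at h2
  rw [hB] at h1
  simp only [Matrix.add_mulVec, Matrix.one_mulVec, Matrix.smul_mulVec, Pi.add_apply,
    Pi.smul_apply, h3, smul_eq_mul] at h1 h2
  rw [h1, h2]
  constructor
  · exact ⟨(B *ᵥ state r) 0, by ring⟩
  · exact ⟨(Y *ᵥ state r) 0, by ring⟩

lemma period_two : ∃ B, M ^ 32 = 1 + ((2 : ℕ) ^ 4 : ℤ) • B :=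
  exists_M_pow_eq (n := 29) (by decide +kernel) (by decide +kernel) (by decide +kernel)

lemma period_three : ∃ B, M ^ 351 = 1 + ((3 : ℕ) ^ 4 : ℤ) • B :=
  exists_M_pow_eq (n := 348) (by decide +kernel) (by decide +kernel) (by decide +kernel)

lemma residues_two : ∀ r < 32, (16 : ℤ) ∣ T r → ∃ c ∈ [0, 1, 4, 17], 32 ∣ r + c := by
  decide +kernel

/-- Residues modulo `351` at which `T` vanishes modulo `81` without being congruent to a zero of
the extended sequence: there `T` is constant and nonzero on the residue class, modulo `3 ^ 5` or
modulo `3 ^ 7`. -/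
lemma residues_three : ∀ r < 351, (81 : ℤ) ∣ T r →
    (∃ c ∈ [0, 1, 4, 17], 351 ∣ r + c) ∨ (¬ (243 : ℤ) ∣ T r ∧ (243 : ℤ) ∣ T (r + 351) - T r) ∨
      (¬ (2187 : ℤ) ∣ T r ∧ (2187 : ℤ) ∣ T (r + 351) - T r) := by
  decide +kernel

lemma two_pow_le {n x : ℕ} (hn : 0 < n) (hx : (2 ^ x : ℤ) ∣ T n) : 2 ^ x ≤ 2 * (n + 17) := by
  by_cases h : ∃ c ∈ [0, 1, 4, 17], 32 ∣ n + c
  · obtain ⟨c, hc, hd⟩ := h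
    have hb : c ≤ 32 ∧ ¬ ((2 : ℕ) ^ (4 + 3) : ℤ) ∣ T (32 - c) := by
      clear hd
      revert c
      decide +kernel
    have := pow_le_near_zero Nat.prime_two (by norm_num) lifts_two period_two
      hc hb.1 hb.2 hd hn (by exact_mod_cast hx)
    norm_num at this
    omega
  · by_cases hx4 : x < 4
    · have : 2 ^ x ≤ 2 ^ 3 := Nat.pow_le_pow_right (by norm_num) (by omega)
      omega
    · exfalso
      have h16 : (16 : ℤ) ∣ T n := (pow_dvd_pow (2 : ℤ) (show 4 ≤ x by omega)).trans hx
      obtain ⟨h1, h2⟩ := T_add_mul period_two (n % 32) (n / 32)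
      rw [Nat.mod_add_div] at h2
      norm_num at h1 h2
      have h1' := h1.mul_left ((n / 32 : ℕ) : ℤ)
      push_cast at h1'
      obtain ⟨c, hc, hd⟩ := residues_two (n % 32) (Nat.mod_lt _ (by norm_num)) (by omega)
      exact h ⟨c, hc, by omega⟩

lemma three_pow_le {n y : ℕ} (hn : 0 < n) (hy : (3 ^ y : ℤ) ∣ T n) :
    3 ^ y ≤ 729 * (n + 17) := by
  by_cases h : ∃ c ∈ [0, 1, 4, 17], 351 ∣ n + c
  · obtain ⟨c, hc, hd⟩ := h
    have hb : c ≤ 351 ∧ ¬ ((3 : ℕ) ^ (4 + 4) : ℤ) ∣ T (351 - c) := by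
      clear hd
      revert c
      decide +kernel
    have := pow_le_near_zero Nat.prime_three (by norm_num) lifts_three period_three
      hc hb.1 hb.2 hd hn (by exact_mod_cast hy)
    norm_num at this
    omega
  · by_cases hy7 : y < 7
    · have : 3 ^ y ≤ 3 ^ 6 := Nat.pow_le_pow_right (by norm_num) (by omega)
      omega
    · exfalso
      have h37 : (2187 : ℤ) ∣ T n := (pow_dvd_pow (3 : ℤ) (show 7 ≤ y by omega)).trans hy
      obtain ⟨h1, h2⟩ := T_add_mul period_three (n % 351) (n / 351)
      rw [Nat.mod_add_div] at h2
      norm_num at h1 h2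
      have h1' := h1.mul_left ((n / 351 : ℕ) : ℤ)
      push_cast at h1'
      rcases residues_three (n % 351) (Nat.mod_lt _ (by norm_num)) (by omega) with
        ⟨c, hc, hd⟩ | ⟨hr, hr'⟩ | ⟨hr, hr'⟩
      · exact h ⟨c, hc, by omega⟩
      all_goals
        have h3 := hr'.mul_left ((n / 351 : ℕ) : ℤ)
        push_cast at h3
        omega

lemma growth (n : ℕ) : 1458 * ((n : ℤ) + 47) ^ 2 < T (n + 30) ∧
    1458 * ((n : ℤ) + 48) ^ 2 < T (n + 31) ∧ 1458 * ((n : ℤ) + 49) ^ 2 < T (n + 32) := by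
  induction n with
  | zero => decide +kernel
  | succ n ih =>
    obtain ⟨h0, h1, h2⟩ := ih
    have h3 : T (n + 33) = T (n + 32) + T (n + 31) + T (n + 30) := T_add_three (n + 30)
    refine ⟨?_, ?_, ?_⟩
    · rw [show n + 1 + 30 = n + 31 by ring]
      push_cast
      linarith
    · rw [show n + 1 + 31 = n + 32 by ring]
      push_cast
      linarith
    · rw [show n + 1 + 32 = n + 33 by ring, h3]
      push_cast
      nlinarith [Int.natCast_nonneg n]

lemma small_cases : ∀ (n : Fin 30) (x : Fin 7) (y : Fin 11), T n = 2 ^ (x : ℕ) * 3 ^ (y : ℕ) →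
    ((n : ℕ), (x : ℕ), (y : ℕ)) ∈
      [(1, 0, 0), (2, 0, 0), (3, 1, 0), (4, 2, 0), (7, 3, 1), (9, 0, 4)] := by
  decide +kernel

end Tribonacci

open Tribonacci in
theorem tribonacci_eq_two_pow_mul_three_pow (n x y : ℕ) (hn : n ≠ 1) :
    T n = 2 ^ x * 3 ^ y ↔
      (n, x, y) = (2, 0, 0) ∨ (n, x, y) = (3, 1, 0) ∨ (n, x, y) = (4, 2, 0) ∨
        (n, x, y) = (7, 3, 1) ∨ (n, x, y) = (9, 0, 4) := by
  constructor
  · intro h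
    have hn0 : 0 < n := by
      rcases Nat.eq_zero_or_pos n with rfl | h0
      · have : (0 : ℤ) < 2 ^ x * 3 ^ y := by positivity
        rw [← h] at this
        exact absurd this (by decide)
      · exact h0
    have hx := two_pow_le (x := x) hn0 (h ▸ dvd_mul_right _ _)
    have hy := three_pow_le (y := y) hn0 (h ▸ dvd_mul_left _ _)
    have hlt : n < 30 := by
      by_contra! hge
      obtain ⟨d, rfl⟩ := Nat.exists_eq_add_of_le' hge
      have hg := (growth d).1
      have hmul : ((2 ^ x * 3 ^ y : ℕ) : ℤ) ≤ ((2 * (d + 30 + 17) * (729 * (d + 30 + 17)) : ℕ) : ℤ) :=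
        Int.ofNat_le.mpr (Nat.mul_le_mul hx hy)
      push_cast at hmul
      rw [h] at hg
      nlinarith
    have hx7 : x < 7 := by
      rw [← Nat.pow_lt_pow_iff_right (a := 2) (by norm_num)]
      omega
    have hy11 : y < 11 := by
      rw [← Nat.pow_lt_pow_iff_right (a := 3) (by norm_num)]
      omega
    have hmem := small_cases ⟨n, hlt⟩ ⟨x, hx7⟩ ⟨y, hy11⟩ h
    simpa [hn] using hmem
  · simp only [Prod.mk.injEq]
    rintro (⟨rfl, rfl, rfl⟩ | ⟨rfl, rfl, rfl⟩ | ⟨rfl, rfl, rfl⟩ | ⟨rfl, rfl, rfl⟩ |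
      ⟨rfl, rfl, rfl⟩) <;> decide
end

section
/- There exists a unique element z of the field K = ℚ(α, β) (viewed as a subfield of ℂ) such that z³ = α/β. -/
/-!
Existence is explicit: `z = (α²β + α² + β - 1) / 2` satisfies `z³ = α / β`, by the relation
`β² = 1 + α + β - α² - αβ` obtained by dividing the difference of the two cubic equations by `α - β`.

For uniqueness, two distinct cube roots in `K = ℚ(α, β)` would have as quotient a primitive cube root
of unity, so `K` would contain an `s` with `s² = -3`. Since `K = ℚ(α) + ℚ(α) β`
(`mem_adjoin_pair`), write `s = P + Q δ` with `P, Q ∈ ℚ(α) ⊆ ℝ` and `δ = 2β + α - 1`, where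
`δ² = -3α² + 2α + 5` is real and `δ` is not. Taking imaginary parts gives `P Q = 0`, and
`Q = 0` would make `-3` a real square, so `Q² δ² = -3`.
As `(3α² - 2α - 1)² δ² = -44` is the discriminant of the cubic, `ℚ(α)` would contain a square
root of `33`. This is impossible, because `ℚ(α)` has degree `3` over `ℚ` (`no_sqrt_33`).
-/

open IntermediateField Polynomial

/-- The cubic `X³ - X² - X - 1` over `ℚ`, in the form `X³ - (X² + X + 1)`. -/
noncomputable def tribPoly : ℚ[X] := X ^ 3 - (X ^ 2 + X + 1)

lemma tribPoly_natDegree : tribPoly.natDegree = 3 := by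
  unfold tribPoly
  compute_degree!

lemma tribPoly_monic : tribPoly.Monic := by
  unfold tribPoly
  monicity!

/-- A rational root would be an integer by the rational root theorem, and the cubic has no root
modulo `3`. -/
lemma tribPoly_irreducible : Irreducible tribPoly := by
  rw [tribPoly_monic.irreducible_iff_roots_eq_zero_of_degree_le_three
    (by rw [tribPoly_natDegree]; norm_num) (by rw [tribPoly_natDegree])]
  rw [Multiset.eq_zero_iff_forall_notMem]
  intro x hx
  have hx0 := (mem_roots'.1 hx).2
  simp only [tribPoly, IsRoot.def, eval_sub, eval_add, eval_pow, eval_X, eval_one] at hx0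
  have hint : IsIntegral ℤ x := by
    refine ⟨X ^ 3 - (X ^ 2 + X + 1), by monicity!, ?_⟩
    simpa using hx0
  obtain ⟨n, rfl⟩ := IsIntegrallyClosed.isIntegral_iff.1 hint
  simp only [eq_intCast] at hx0
  have h1 : n ^ 3 - (n ^ 2 + n + 1) = 0 := by exact_mod_cast hx0
  have h2 : (n : ZMod 3) ^ 3 - ((n : ZMod 3) ^ 2 + n + 1) = 0 := by exact_mod_cast congrArg _ h1
  generalize (n : ZMod 3) = m at h2
  revert m
  decide

lemma isIntegral_root {x : ℂ} (hx : x ^ 3 = x ^ 2 + x + 1) : IsIntegral ℚ x :=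
  ⟨tribPoly, tribPoly_monic, by simp [tribPoly, hx]⟩

lemma finrank_adjoin_root {α : ℂ} (hα : α ^ 3 = α ^ 2 + α + 1) :
    Module.finrank ℚ ℚ⟮α⟯ = 3 := by
  rw [adjoin.finrank (isIntegral_root hα),
    ← minpoly.eq_of_irreducible_of_monic tribPoly_irreducible (by simp [tribPoly, hα])
      tribPoly_monic, tribPoly_natDegree]

/-- A square root of `33` in `ℚ(α)` would have degree at most `2` and dividing `3`, hence would be
rational. -/
lemma no_sqrt_33 {α : ℂ} (hα : α ^ 3 = α ^ 2 + α + 1) (r : ℚ⟮α⟯) : r ^ 2 ≠ 33 := by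
  intro hr
  have hroot : aeval r (X ^ 2 - C 33 : ℚ[X]) = 0 := by simp [hr]
  have hmonic : (X ^ 2 - C 33 : ℚ[X]).Monic := by monicity!
  have hint : IsIntegral ℚ r := ⟨_, hmonic, hroot⟩
  have hdvd := minpoly.degree_dvd hint
  rw [finrank_adjoin_root hα] at hdvd
  have hle : (minpoly ℚ r).natDegree ≤ 2 :=
    (natDegree_le_of_dvd (minpoly.dvd ℚ r hroot) hmonic.ne_zero).trans (by compute_degree)
  have hone : (minpoly ℚ r).natDegree = 1 := by
    rcases (Nat.dvd_prime Nat.prime_three).1 hdvd with h | h <;> omega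
  obtain ⟨q, rfl⟩ := minpoly.natDegree_eq_one_iff.1 hone
  have hq : q ^ 2 = 33 := by
    apply (algebraMap ℚ ℚ⟮α⟯).injective
    simpa using hr
  have hsq : IsSquare (33 : ℚ) := ⟨q, by rw [← hq, sq]⟩
  revert hsq
  norm_num

lemma im_eq_zero_of_mem {α : ℂ} (hα : α.im = 0) {x : ℂ} (hx : x ∈ ℚ⟮α⟯) : x.im = 0 := by
  induction hx using adjoin_induction with
  | mem x hx => rw [Set.mem_singleton_iff.1 hx, hα]
  | algebraMap x => simp
  | add x y _ _ hx hy => simp [hx, hy]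
  | inv x _ hx => simp [hx]
  | mul x y _ _ hx hy => simp [hx, hy]

/-- Two distinct roots of the cubic satisfy the divided-difference relation. -/
lemma quadratic_relation {α β : ℂ} (hα : α ^ 3 = α ^ 2 + α + 1) (hβ : β ^ 3 = β ^ 2 + β + 1)
    (hne : α ≠ β) : β ^ 2 = 1 + α + β - α ^ 2 - α * β := by
  apply mul_left_cancel₀ (sub_ne_zero.2 hne)
  linear_combination hα - hβ

/-- Every element of `ℚ(α, β)` is of the form `p + q β` with `p, q ∈ ℚ(α)`. As `α` and `β` are
algebraic, the field is generated as an algebra, so closure under inverses is automatic. -/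
lemma mem_adjoin_pair {α β : ℂ} (hα : α ^ 3 = α ^ 2 + α + 1) (hβ : β ^ 3 = β ^ 2 + β + 1)
    (hne : α ≠ β) {x : ℂ} (hx : x ∈ adjoin ℚ ({α, β} : Set ℂ)) :
    ∃ p ∈ ℚ⟮α⟯, ∃ q ∈ ℚ⟮α⟯, x = p + q * β := by
  have hrel := quadratic_relation hα hβ hne
  have hαm : α ∈ ℚ⟮α⟯ := mem_adjoin_simple_self ℚ α
  rw [← mem_toSubalgebra, adjoin_toSubalgebra_of_isAlgebraic] at hx
  · induction hx using Algebra.adjoin_induction with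
    | mem x hx =>
      rcases hx with rfl | hx
      · exact ⟨x, hαm, 0, zero_mem _, by simp⟩
      · exact ⟨0, zero_mem _, 1, one_mem _, by simpa using hx⟩
    | algebraMap r => exact ⟨_, _root_.algebraMap_mem _ r, 0, zero_mem _, by simp⟩
    | add x y _ _ hx hy =>
      obtain ⟨p, hp, q, hq, rfl⟩ := hx
      obtain ⟨p', hp', q', hq', rfl⟩ := hy
      exact ⟨p + p', add_mem hp hp', q + q', add_mem hq hq', by ring⟩
    | mul x y _ _ hx hy =>
      obtain ⟨p, hp, q, hq, rfl⟩ := hx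
      obtain ⟨p', hp', q', hq', rfl⟩ := hy
      refine ⟨p * p' + q * q' * (1 + α - α ^ 2), ?_, p * q' + q * p' + q * q' * (1 - α), ?_, ?_⟩
      · exact add_mem (mul_mem hp hp') (mul_mem (mul_mem hq hq')
          (sub_mem (add_mem (one_mem _) hαm) (pow_mem hαm 2)))
      · exact add_mem (add_mem (mul_mem hp hq') (mul_mem hq hp')) (mul_mem (mul_mem hq hq')
          (sub_mem (one_mem _) hαm))
      · linear_combination q * q' * hrel
  · rintro x (rfl | hx)
    · exact (isIntegral_root hα).isAlgebraic
    · rw [Set.mem_singleton_iff.1 hx]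
      exact (isIntegral_root hβ).isAlgebraic

lemma no_sqrt_neg_three {α β : ℂ} (hαim : α.im = 0) (hα : α ^ 3 = α ^ 2 + α + 1)
    (hβ : β ^ 3 = β ^ 2 + β + 1) (hβim : β.im ≠ 0) {s : ℂ}
    (hs : s ∈ adjoin ℚ ({α, β} : Set ℂ)) : s ^ 2 ≠ -3 := by
  intro hs2
  have hne : α ≠ β := by
    rintro rfl
    exact hβim hαim
  have hrel := quadratic_relation hα hβ hne
  have hαm : α ∈ ℚ⟮α⟯ := mem_adjoin_simple_self ℚ α
  obtain ⟨p, hp, q, hq, rfl⟩ := mem_adjoin_pair hα hβ hne hs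
  obtain ⟨P, hPm, hP⟩ : ∃ P ∈ ℚ⟮α⟯, P = p - q * (α - 1) / 2 :=
    ⟨_, sub_mem hp (div_mem (mul_mem hq (sub_mem hαm (one_mem _)))
      (by simp)), rfl⟩
  obtain ⟨Q, hQm, hQ⟩ : ∃ Q ∈ ℚ⟮α⟯, Q = q / 2 :=
    ⟨_, div_mem hq (by simp), rfl⟩
  obtain ⟨δ, hδ⟩ : ∃ δ, δ = 2 * β + α - 1 := ⟨_, rfl⟩
  have hδ2 : δ ^ 2 = -3 * α ^ 2 + 2 * α + 5 := by
    rw [hδ]; linear_combination 4 * hrel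
  have hδim : δ.im ≠ 0 := by
    rw [hδ]; simpa [hαim] using hβim
  have hsum : P ^ 2 + Q ^ 2 * (-3 * α ^ 2 + 2 * α + 5) + 2 * (P * Q) * δ = -3 := by
    rw [← hδ2, ← hs2, hP, hQ, hδ]; ring
  have hPim := im_eq_zero_of_mem hαim hPm
  have hQim := im_eq_zero_of_mem hαim hQm
  have hPQ : P * Q = 0 := by
    have h2 : (P ^ 2 + Q ^ 2 * (-3 * α ^ 2 + 2 * α + 5)).im = 0 := by
      simp [pow_two, hPim, hQim, hαim]
    have h1 := congrArg Complex.im hsum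
    rw [Complex.add_im, h2] at h1
    simp [hPim, hQim, hδim] at h1
    apply Complex.ext
    · simpa [hPim] using h1
    · simp [hPim, hQim]
  rcases mul_eq_zero.1 hPQ with h0 | h0
  · rw [h0] at hsum
    have hQ2 : Q ^ 2 * (-3 * α ^ 2 + 2 * α + 5) = -3 := by linear_combination hsum
    -- `d` is the derivative of the cubic at `α`, and `d² δ²` is its discriminant.
    obtain ⟨d, hd⟩ : ∃ d, d = 3 * α ^ 2 - 2 * α - 1 := ⟨_, rfl⟩
    have hdm : d ∈ ℚ⟮α⟯ := by
      rw [hd]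
      exact sub_mem (sub_mem (mul_mem (by simp) (pow_mem hαm 2))
        (mul_mem (by simp) hαm)) (one_mem _)
    have hdisc : d ^ 2 * (-3 * α ^ 2 + 2 * α + 5) = -44 := by
      rw [hd]
      linear_combination (-27 * α ^ 3 + 27 * α ^ 2 + 27 * α - 49) * hα
    have hd0 : d ≠ 0 := by
      intro h
      rw [h] at hdisc
      norm_num at hdisc
    have h44 : 44 * Q ^ 2 = 3 * d ^ 2 := by
      linear_combination Q ^ 2 * hdisc - d ^ 2 * hQ2
    have hrm : 22 * Q / d ∈ ℚ⟮α⟯ :=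
      div_mem (mul_mem (by simp) hQm) hdm
    apply no_sqrt_33 hα ⟨_, hrm⟩
    apply Subtype.ext
    change (22 * Q / d) ^ 2 = 33
    field_simp
    linear_combination 11 * h44
  · rw [h0] at hsum
    have h1 := congrArg Complex.re hsum
    simp [pow_two, hPim] at h1
    nlinarith [mul_self_nonneg P.re]

theorem exists_unique_cube_root_alpha_div_beta (α β : ℂ)
    (hαim : α.im = 0) (hα : α ^ 3 = α ^ 2 + α + 1)
    (hα1 : 1.83 < α.re) (hα2 : α.re < 1.84)
    (hβ : β ^ 3 = β ^ 2 + β + 1) (hβim : β.im ≠ 0) :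
    ∃! z : ℂ, z ∈ IntermediateField.adjoin ℚ ({α, β} : Set ℂ) ∧ z ^ 3 = α / β := by
  have hne : α ≠ β := by
    rintro rfl
    exact hβim hαim
  have hrel := quadratic_relation hα hβ hne
  have hα0 : α ≠ 0 := by
    rintro rfl
    norm_num at hα
  have hβ0 : β ≠ 0 := by
    rintro rfl
    norm_num at hβ
  have hαm : α ∈ adjoin ℚ ({α, β} : Set ℂ) := subset_adjoin _ _ (by simp)
  have hβm : β ∈ adjoin ℚ ({α, β} : Set ℂ) := subset_adjoin _ _ (by simp)
  have h2m : (2 : ℂ) ∈ adjoin ℚ ({α, β} : Set ℂ) := by simp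
  obtain ⟨z, hz⟩ : ∃ z, z = (α ^ 2 * β + α ^ 2 + β - 1) / 2 := ⟨_, rfl⟩
  have hzm : z ∈ adjoin ℚ ({α, β} : Set ℂ) := by
    rw [hz]
    exact div_mem (sub_mem (add_mem (add_mem (mul_mem (pow_mem hαm 2) hβm) (pow_mem hαm 2)) hβm)
      (one_mem _)) h2m
  have hz3 : z ^ 3 = α / β := by
    rw [eq_div_iff hβ0, hz]
    grind
  have hz0 : z ≠ 0 := by
    rintro rfl
    exact div_ne_zero hα0 hβ0 (by simpa using hz3.symm)
  refine ⟨z, ⟨hzm, hz3⟩, ?_⟩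
  rintro y ⟨hym, hy3⟩
  by_contra hyz
  have hquad : y ^ 2 + y * z + z ^ 2 = 0 := by
    apply mul_left_cancel₀ (sub_ne_zero.2 hyz)
    linear_combination hy3 - hz3
  -- With `y = ω z` for a primitive cube root of unity `ω`, this element is `2 ω + 1`.
  apply no_sqrt_neg_three hαim hα hβ hβim (s := (2 * y + z) / z)
    (div_mem (add_mem (mul_mem h2m hym) hzm) hzm)
  field_simp
  linear_combination 4 * hquad
end

section
/- Let z ∈ K = ℚ(α, β) satisfy z³ = α/β. Then z⁶ + z⁵ + 2z⁴ + 3z³ + 2z² + z + 1 = 0, and the polynomial Q(X) = X⁶ + X⁵ + 2X⁴ + 3X³ + 2X² + X + 1 is irreducible over ℚ; that is, Q is the minimal polynomial of z over ℚ. -/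
/-!
Write `γ = 1 - α - β` for the third root of `X³ - X² - X - 1`. The element
`z₀ = γ (α² - 1) / (γ² - 1)` of `K = ℚ(α, β)` satisfies `z₀³ = α / β` and `z₀ + z₀⁻¹ = -γ`
(`cubeRoot_spec`). Since `Q(X) = X³ (U³ + U² - U + 1)` for `U = X + X⁻¹`, and `-γ` is a root of
`U³ + U² - U + 1`, it follows that `Q(z₀) = 0`.

Any `z ∈ K` with `z³ = α / β` equals `z₀`, because `K` contains no primitive cube root of unity:
the discriminant of the cubic is `-44`, so every element of `K` has its real part in `ℚ(α)` and its
imaginary part in `√11 ℚ(α)` (`mem_adjoin_re_im`); a primitive cube root of unity in `K` would give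
an element of `ℚ(α)` with square `3 / 44`, which is impossible in a cubic field
(`sq_ne_three_div`).

For irreducibility, let `w` be a root of `X² + α X + 1`. As above `Q(w) = 0`, and `α ∈ ℚ(w)`, so `3`
divides the degree of `w`. The degree is not `3`, since otherwise `ℚ(w) = ℚ(α) ⊆ ℝ`, while `w` is
not real because `α² < 4`. Hence `w` has degree `6` and `Q` is its minimal polynomial
(`irreducible_sextic`).
-/

open Polynomial IntermediateField

/-! ### The cubic -/

lemma irreducible_cubic : Irreducible (X ^ 3 - X ^ 2 - X - 1 : ℚ[X]) := by
  have hdeg : (X ^ 3 - X ^ 2 - X - 1 : ℚ[X]).natDegree = 3 := by compute_degree!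
  have hmon : (X ^ 3 - X ^ 2 - X - 1 : ℚ[X]).Monic := by monicity!
  rw [hmon.irreducible_iff_roots_eq_zero_of_degree_le_three (by omega) (by omega)]
  rw [Multiset.eq_zero_iff_forall_notMem]
  intro r hr
  have hr' : r ^ 3 - r ^ 2 - r - 1 = 0 := by
    have := (mem_roots'.1 hr).2
    simpa [IsRoot] using this
  have hintegral : IsIntegral ℤ r := by
    refine ⟨X ^ 3 - X ^ 2 - X - 1, by monicity!, ?_⟩
    simpa using hr'
  obtain ⟨n, rfl⟩ := IsIntegrallyClosed.isIntegral_iff.1 hintegral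
  have hn : n ^ 3 - n ^ 2 - n - 1 = 0 := by
    have : (n : ℚ) ^ 3 - n ^ 2 - n - 1 = 0 := by simpa using hr'
    exact_mod_cast this
  have hdvd : n ∣ 1 := ⟨n ^ 2 - n - 1, by linarith⟩
  rcases Int.isUnit_iff.1 (isUnit_of_dvd_one hdvd) with rfl | rfl <;> norm_num at hn

lemma minpoly_cubic {F : Type*} [Field F] [Algebra ℚ F] {a : F} (ha : a ^ 3 = a ^ 2 + a + 1) :
    minpoly ℚ a = X ^ 3 - X ^ 2 - X - 1 := by
  refine (minpoly.eq_of_irreducible_of_monic irreducible_cubic ?_ (by monicity!)).symm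
  simpa [sub_eq_zero, sub_sub, add_assoc] using ha

lemma isIntegral_cubic {F : Type*} [Field F] [Algebra ℚ F] {a : F} (ha : a ^ 3 = a ^ 2 + a + 1) :
    IsIntegral ℚ a :=
  ⟨X ^ 3 - X ^ 2 - X - 1, by monicity!, by simpa [sub_eq_zero, sub_sub, add_assoc] using ha⟩

lemma natDegree_minpoly_cubic {F : Type*} [Field F] [Algebra ℚ F] {a : F}
    (ha : a ^ 3 = a ^ 2 + a + 1) : (minpoly ℚ a).natDegree = 3 := by
  rw [minpoly_cubic ha]; compute_degree!

/-! ### Cube roots of unity and the field `ℚ(α, β)` -/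

/-- The cubic field `ℚ(a)` contains no square root of `3 / 44`, as `2 ∤ 3`. -/
lemma sq_ne_three_div {a t : ℝ} (ha : a ^ 3 = a ^ 2 + a + 1) (ht : t ∈ ℚ⟮a⟯) :
    t ^ 2 ≠ 3 / 44 := by
  intro h
  have hfin : Module.finrank ℚ ℚ⟮a⟯ = 3 := by
    rw [adjoin.finrank (isIntegral_cubic ha), natDegree_minpoly_cubic ha]
  have : FiniteDimensional ℚ ℚ⟮a⟯ := adjoin.finiteDimensional (isIntegral_cubic ha)
  have hdvd : (minpoly ℚ t).natDegree ∣ 3 := by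
    have h1 := minpoly.degree_dvd (K := ℚ) (x := (⟨t, ht⟩ : ℚ⟮a⟯)) (IsIntegral.of_finite ℚ _)
    rwa [hfin, ← minpoly.algebraMap_eq (algebraMap ℚ⟮a⟯ ℝ).injective] at h1
  have hle : (minpoly ℚ t).natDegree ≤ 2 := by
    have hd : minpoly ℚ t ∣ X ^ 2 - C (3 / 44) := minpoly.dvd ℚ t (by simp [h])
    have hdeg : (X ^ 2 - C (3 / 44) : ℚ[X]).natDegree = 2 := by compute_degree!
    rw [← hdeg]
    refine natDegree_le_of_dvd hd ?_
    intro h0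
    rw [h0] at hdeg
    simp at hdeg
  have hone : (minpoly ℚ t).natDegree = 1 := by
    have := (Nat.dvd_prime Nat.prime_three).1 hdvd
    omega
  obtain ⟨q, rfl⟩ := minpoly.natDegree_eq_one_iff.1 hone
  have hq : q ^ 2 = 3 / 44 := by
    have : ((q ^ 2 : ℚ) : ℝ) = ((3 / 44 : ℚ) : ℝ) := by push_cast; simpa using h
    exact_mod_cast this
  have hsq : IsSquare (33 : ℚ) := ⟨22 * q, by linarith⟩
  have h33 : IsSquare (33 : ℕ) := by
    have := Rat.isSquare_natCast_iff (n := 33)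
    exact this.1 (by exact_mod_cast hsq)
  obtain ⟨m, hm⟩ := h33
  have : m < 6 := by nlinarith
  interval_cases m <;> omega

/-- `ℚ(α, β)` lies in `ℚ(a) + √-11 ℚ(a)`, where `a` is the real number `α` and `d` is the quotient
of the imaginary part of `β` by `√11`. -/
lemma mem_adjoin_re_im {a d : ℝ} {β z : ℂ} (hre : β.re ∈ ℚ⟮a⟯) (hd : d ∈ ℚ⟮a⟯)
    (him : β.im = √11 * d) (hz : z ∈ adjoin ℚ ({(a : ℂ), β} : Set ℂ)) :
    z.re ∈ ℚ⟮a⟯ ∧ ∃ t ∈ ℚ⟮a⟯, z.im = √11 * t := by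
  have h11 : √11 * √11 = (11 : ℝ) := Real.mul_self_sqrt (by norm_num)
  have m11 : (11 : ℝ) ∈ ℚ⟮a⟯ := by simp
  induction hz using adjoin_induction with
  | mem x hx =>
    rcases hx with rfl | rfl
    · exact ⟨by simpa using mem_adjoin_simple_self ℚ a, 0, zero_mem _, by simp⟩
    · exact ⟨hre, d, hd, him⟩
  | algebraMap q =>
    refine ⟨?_, 0, zero_mem _, by simp⟩
    simp
  | add x y _ _ hx hy =>
    obtain ⟨hx, t, ht, ex⟩ := hx
    obtain ⟨hy, u, hu, ey⟩ := hy
    exact ⟨add_mem hx hy, t + u, add_mem ht hu, by rw [Complex.add_im, ex, ey]; ring⟩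
  | mul x y _ _ hx hy =>
    obtain ⟨hx, t, ht, ex⟩ := hx
    obtain ⟨hy, u, hu, ey⟩ := hy
    refine ⟨?_, x.re * u + t * y.re, add_mem (mul_mem hx hu) (mul_mem ht hy), ?_⟩
    · have : (x * y).re = x.re * y.re - 11 * (t * u) := by
        rw [Complex.mul_re, ex, ey]; linear_combination (-t * u) * h11
      rw [this]
      exact sub_mem (mul_mem hx hy) (mul_mem m11 (mul_mem ht hu))
    · rw [Complex.mul_im, ex, ey]; ring
  | inv x _ hx =>
    obtain ⟨hx, t, ht, ex⟩ := hx
    have hN : Complex.normSq x = x.re * x.re + 11 * (t * t) := by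
      rw [Complex.normSq_apply, ex]; linear_combination (t * t) * h11
    have mN : Complex.normSq x ∈ ℚ⟮a⟯ := by
      rw [hN]
      exact add_mem (mul_mem hx hx) (mul_mem m11 (mul_mem ht ht))
    refine ⟨?_, -t / Complex.normSq x, div_mem (neg_mem ht) mN, ?_⟩
    · rw [Complex.inv_re]; exact div_mem hx mN
    · rw [Complex.inv_im, ex]; ring

/-- `ℚ(α, β)` contains no primitive cube root of unity. The number `3 α² - 2 α - 1` below is
`(α - β) (α - γ)`, whose product with `β - γ` is a square root of the discriminant `-44`. -/
lemma no_primitive_cube_root {a : ℝ} {β ρ : ℂ} (ha : a ^ 3 = a ^ 2 + a + 1)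
    (hβim : β.im ≠ 0) (hq : (a : ℂ) ^ 2 + a * β + β ^ 2 - a - β - 1 = 0)
    (hρ : ρ ∈ adjoin ℚ ({(a : ℂ), β} : Set ℂ)) : ρ ^ 2 + ρ + 1 ≠ 0 := by
  intro h
  have e1 : a ^ 2 + a * β.re + (β.re ^ 2 - β.im ^ 2) - a - β.re - 1 = 0 := by
    have := congrArg Complex.re hq
    simp [pow_two] at this
    linarith
  have e2 : β.im * (a + 2 * β.re - 1) = 0 := by
    have := congrArg Complex.im hq
    simp [pow_two] at this
    linarith
  have hre : β.re = (1 - a) / 2 := by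
    have := (mul_eq_zero.1 e2).resolve_left hβim
    linarith
  have mema : a ∈ ℚ⟮a⟯ := mem_adjoin_simple_self ℚ a
  have memq (q : ℚ) : (q : ℝ) ∈ ℚ⟮a⟯ := by simp
  have hD : (β.im * (3 * a ^ 2 - 2 * a - 1)) ^ 2 = 11 := by
    rw [hre] at e1
    have e3 : β.im ^ 2 = (3 * a ^ 2 - 2 * a - 5) / 4 := by linarith
    rw [mul_pow, e3]
    grind
  have hD0 : 3 * a ^ 2 - 2 * a - 1 ≠ 0 := by
    intro h0
    rw [h0] at hD
    norm_num at hD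
  have mD : 3 * a ^ 2 - 2 * a - 1 ∈ ℚ⟮a⟯ := by
    have := sub_mem (sub_mem (mul_mem (memq 3) (pow_mem mema 2)) (mul_mem (memq 2) mema)) (memq 1)
    simpa using this
  have hd : ∃ d ∈ ℚ⟮a⟯, β.im = √11 * d := by
    have h11 : √11 ^ 2 = (11 : ℝ) := Real.sq_sqrt (by norm_num)
    rcases sq_eq_sq_iff_eq_or_eq_neg.1 (hD.trans h11.symm) with h1 | h1
    · exact ⟨(3 * a ^ 2 - 2 * a - 1)⁻¹, inv_mem mD, by rw [← h1, mul_inv_cancel_right₀ hD0]⟩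
    · refine ⟨-(3 * a ^ 2 - 2 * a - 1)⁻¹, neg_mem (inv_mem mD), ?_⟩
      rw [mul_neg, ← neg_mul, ← h1, mul_inv_cancel_right₀ hD0]
  obtain ⟨d, md, hd⟩ := hd
  have mre : β.re ∈ ℚ⟮a⟯ := by
    rw [hre]
    have := div_mem (sub_mem (memq 1) mema) (memq 2)
    simpa using this
  obtain ⟨-, t, mt, ht⟩ := mem_adjoin_re_im mre md hd hρ
  have r1 : ρ.re ^ 2 - ρ.im ^ 2 + ρ.re + 1 = 0 := by
    have := congrArg Complex.re h
    simp [pow_two] at this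
    linarith
  have r2 : ρ.im * (2 * ρ.re + 1) = 0 := by
    have := congrArg Complex.im h
    simp [pow_two] at this
    linarith
  refine sq_ne_three_div ha mt ?_
  have h11 : √11 ^ 2 = (11 : ℝ) := Real.sq_sqrt (by norm_num)
  rcases mul_eq_zero.1 r2 with h0 | h0
  · rw [h0] at r1; nlinarith [sq_nonneg (ρ.re + 1 / 2)]
  · have hr : ρ.re = -1 / 2 := by linarith
    rw [hr, ht, mul_pow, h11] at r1
    linarith

/-! ### The sextic -/

/-- If `z + z⁻¹ = -g` with `g` a root of the cubic, then `z` is a root of `Q`. -/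
lemma sextic_eq_zero {g z : ℂ} (hg : g ^ 3 = g ^ 2 + g + 1) (h : z ^ 2 + g * z + 1 = 0) :
    z ^ 6 + z ^ 5 + 2 * z ^ 4 + 3 * z ^ 3 + 2 * z ^ 2 + z + 1 = 0 := by
  grind

/-- The explicit cube root `g (α² - 1) / (g² - 1)` of `α / β` in `ℚ(α, β)`, where
`g = 1 - α - β`. -/
lemma cubeRoot_spec {α β : ℂ} (hα : α ^ 3 = α ^ 2 + α + 1) (hβ : β ^ 3 = β ^ 2 + β + 1)
    (hne : α ≠ β) : ∃ g z : ℂ, z ∈ adjoin ℚ ({α, β} : Set ℂ) ∧ g ^ 3 = g ^ 2 + g + 1 ∧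
      z ^ 2 + g * z + 1 = 0 ∧ z ^ 3 = α / β := by
  have hq : α ^ 2 + α * β + β ^ 2 - α - β - 1 = 0 := by
    refine (mul_eq_zero.1 ?_).resolve_left (sub_ne_zero.2 hne)
    linear_combination hα - hβ
  have hβ0 : β ≠ 0 := by rintro rfl; norm_num at hβ
  have mα : α ∈ adjoin ℚ ({α, β} : Set ℂ) := subset_adjoin ℚ _ (by simp)
  have mβ : β ∈ adjoin ℚ ({α, β} : Set ℂ) := subset_adjoin ℚ _ (by simp)
  obtain ⟨g, hgdef⟩ : ∃ g, g = 1 - α - β := ⟨_, rfl⟩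
  have mg : g ∈ adjoin ℚ ({α, β} : Set ℂ) := by
    rw [hgdef]; exact sub_mem (sub_mem (one_mem _) mα) mβ
  have hg : g ^ 3 = g ^ 2 + g + 1 := by subst hgdef; grind
  have hd : g ^ 2 - 1 ≠ 0 := by
    intro h
    have h2 : (2 : ℂ) = 0 := by linear_combination (g - 1) * h - hg
    norm_num at h2
  have e1 : (g * (α ^ 2 - 1)) ^ 2 + g * (g * (α ^ 2 - 1)) * (g ^ 2 - 1) + (g ^ 2 - 1) ^ 2 = 0 := by
    subst hgdef; grind
  have e2 : (g * (α ^ 2 - 1)) ^ 3 * β = α * (g ^ 2 - 1) ^ 3 := by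
    subst hgdef; grind
  refine ⟨g, g * (α ^ 2 - 1) / (g ^ 2 - 1), ?_, hg, ?_, ?_⟩
  · exact div_mem (mul_mem mg (sub_mem (pow_mem mα 2) (one_mem _)))
      (sub_mem (pow_mem mg 2) (one_mem _))
  · field_simp
    linear_combination e1
  · rw [div_pow, div_eq_div_iff (pow_ne_zero 3 hd) hβ0]
    exact e2

lemma irreducible_sextic {a : ℝ} (ha : a ^ 3 = a ^ 2 + a + 1) (ha4 : a ^ 2 < 4) :
    Irreducible (X ^ 6 + X ^ 5 + C 2 * X ^ 4 + C 3 * X ^ 3 + C 2 * X ^ 2 + X + 1 : ℚ[X]) := by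
  have haC : (a : ℂ) ^ 3 = (a : ℂ) ^ 2 + a + 1 := by exact_mod_cast ha
  obtain ⟨w, hw, hwim⟩ : ∃ w : ℂ, w ^ 2 + a * w + 1 = 0 ∧ w.im ≠ 0 := by
    have hs : 0 < √(4 - a ^ 2) := Real.sqrt_pos.2 (by linarith)
    have hs2 : √(4 - a ^ 2) ^ 2 = 4 - a ^ 2 := Real.sq_sqrt (by linarith)
    refine ⟨⟨-a / 2, √(4 - a ^ 2) / 2⟩, ?_, by simpa using hs.ne'⟩
    apply Complex.ext
    · simp only [pow_two] at hs2
      simp [pow_two]; linarith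
    · simp [pow_two]; ring
  have hw0 : w ≠ 0 := by rintro rfl; simp at hwim
  set Q : ℚ[X] := X ^ 6 + X ^ 5 + C 2 * X ^ 4 + C 3 * X ^ 3 + C 2 * X ^ 2 + X + 1 with hQ
  have hQmon : Q.Monic := by rw [hQ]; monicity!
  have hQdeg : Q.natDegree = 6 := by rw [hQ]; compute_degree!
  have hQw : aeval w Q = 0 := by
    have := sextic_eq_zero haC hw
    simpa [hQ] using this
  have hintegral : IsIntegral ℚ w := ⟨Q, hQmon, by simpa [aeval_def] using hQw⟩
  have hdvd : minpoly ℚ w ∣ Q := minpoly.dvd ℚ w hQw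
  have hle : (minpoly ℚ w).natDegree ≤ 6 := hQdeg ▸ natDegree_le_of_dvd hdvd hQmon.ne_zero
  have hpos : 0 < (minpoly ℚ w).natDegree := minpoly.natDegree_pos hintegral
  have : FiniteDimensional ℚ ℚ⟮w⟯ := adjoin.finiteDimensional hintegral
  have mw : w ∈ ℚ⟮w⟯ := mem_adjoin_simple_self ℚ w
  have maw : (a : ℂ) ∈ ℚ⟮w⟯ := by
    have : (a : ℂ) = -((w ^ 2 + 1) / w) := by
      field_simp
      linear_combination hw
    rw [this]
    exact neg_mem (div_mem (add_mem (pow_mem mw 2) (one_mem _)) mw)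
  have h3 : 3 ∣ (minpoly ℚ w).natDegree := by
    have h1 := minpoly.degree_dvd (K := ℚ) (x := (⟨a, maw⟩ : ℚ⟮w⟯)) (IsIntegral.of_finite ℚ _)
    rw [← minpoly.algebraMap_eq (algebraMap ℚ⟮w⟯ ℂ).injective, adjoin.finrank hintegral,
      natDegree_minpoly_cubic (by exact haC)] at h1
    exact h1
  have hne3 : (minpoly ℚ w).natDegree ≠ 3 := by
    intro h
    have heq : ℚ⟮(a : ℂ)⟯ = ℚ⟮w⟯ := by
      refine eq_of_le_of_finrank_eq (adjoin_simple_le_iff.2 maw) ?_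
      rw [adjoin.finrank hintegral, h, adjoin.finrank (isIntegral_cubic haC),
        natDegree_minpoly_cubic haC]
    have hreal : ℚ⟮(a : ℂ)⟯ ≤ (IsScalarTower.toAlgHom ℚ ℝ ℂ).fieldRange :=
      adjoin_simple_le_iff.2 ⟨a, by simp⟩
    obtain ⟨r, hr⟩ := hreal (heq ▸ mw)
    apply hwim
    rw [← hr]
    simp
  have h6 : (minpoly ℚ w).natDegree = 6 := by omega
  have : minpoly ℚ w = Q :=
    (eq_of_monic_of_dvd_of_natDegree_le (minpoly.monic hintegral) hQmon hdvd (by omega)).symm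
  rw [← this]
  exact minpoly.irreducible hintegral

open Polynomial in
theorem minpoly_cube_root_alpha_div_beta (α β z : ℂ)
    (hαim : α.im = 0) (hα : α ^ 3 = α ^ 2 + α + 1)
    (hα1 : 1.83 < α.re) (hα2 : α.re < 1.84)
    (hβ : β ^ 3 = β ^ 2 + β + 1) (hβim : β.im ≠ 0)
    (hzmem : z ∈ IntermediateField.adjoin ℚ ({α, β} : Set ℂ))
    (hz : z ^ 3 = α / β) :
    z ^ 6 + z ^ 5 + 2 * z ^ 4 + 3 * z ^ 3 + 2 * z ^ 2 + z + 1 = 0 ∧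
      Irreducible (X ^ 6 + X ^ 5 + C 2 * X ^ 4 + C 3 * X ^ 3 + C 2 * X ^ 2 + X + 1 : ℚ[X]) ∧
      minpoly ℚ z =
        X ^ 6 + X ^ 5 + C 2 * X ^ 4 + C 3 * X ^ 3 + C 2 * X ^ 2 + X + 1 := by
  obtain ⟨a, rfl⟩ : ∃ a : ℝ, α = a := ⟨α.re, Complex.ext (by simp) (by simpa using hαim)⟩
  have ha : a ^ 3 = a ^ 2 + a + 1 := by exact_mod_cast hα
  have ha4 : a ^ 2 < 4 := by
    simp only [Complex.ofReal_re] at hα1 hα2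
    nlinarith
  have hne : (a : ℂ) ≠ β := by rintro rfl; simp at hβim
  have hq : (a : ℂ) ^ 2 + a * β + β ^ 2 - a - β - 1 = 0 := by
    refine (mul_eq_zero.1 ?_).resolve_left (sub_ne_zero.2 hne)
    linear_combination hα - hβ
  obtain ⟨g, z₀, mz₀, hg, hz₀, hz₀3⟩ := cubeRoot_spec hα hβ hne
  have hz₀0 : z₀ ≠ 0 := by rintro rfl; norm_num at hz₀
  have hzz : z = z₀ := by
    have hρ := no_primitive_cube_root ha hβim hq (div_mem hzmem mz₀)
    have h3 : (z / z₀) ^ 3 = 1 := by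
      rw [div_pow, hz, ← hz₀3, div_self (pow_ne_zero 3 hz₀0)]
    have hfac : (z / z₀ - 1) * ((z / z₀) ^ 2 + z / z₀ + 1) = 0 := by linear_combination h3
    have h1 := (mul_eq_zero.1 hfac).resolve_right hρ
    exact (div_eq_one_iff_eq hz₀0).1 (sub_eq_zero.1 h1)
  have hQ := sextic_eq_zero hg hz₀
  rw [← hzz] at hQ
  have hirr := irreducible_sextic ha ha4
  refine ⟨hQ, hirr, (minpoly.eq_of_irreducible_of_monic hirr ?_ (by monicity!)).symm⟩
  simpa using hQ
end

section
/- Suppose the nonnegative integers (n, n₁, x, x₁, y, y₁) satisfy T_n − 2^x·3^y = T_{n₁} − 2^{x₁}·3^{y₁}, with n > 310 and n > n₁. Then, setting X := x·log 2 + y·log 3, one has 0.08·α^n < 2^x·3^y < α^n·(n·log α)^{60·log(n·log α)}, and consequently n·log α − 3 < X < n·log α + 60·(log(n·log α))². -/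
/-! ### An upper bound for the least common multiple of the first integers -/

open Nat in
/-- By the formula of Legendre, comparing the exponents of a prime `p` reduces the claim to
`1 + ⌊3k/q⌋ + ⌊2k/q⌋ + ⌊k/q⌋ ≤ ⌊6k/q⌋ + [q ≤ k]` for every prime power `q = p ^ i ≤ 6k`. -/
theorem lcmUpto_mul_dvd (k : ℕ) :
    lcmUpto (6 * k) * ((3 * k)! * (2 * k)! * k !) ∣ (6 * k)! * lcmUpto k := by
  have hf : ∀ m : ℕ, m ! ≠ 0 := Nat.factorial_ne_zero
  have hl := lcmUpto_ne_zero
  rw [← Nat.factorization_prime_le_iff_dvd (by simp [hf, hl]) (by simp [hf, hl])]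
  intro p hp
  rw [Nat.factorization_mul (hl _) (by simp [hf]), Nat.factorization_mul (by simp [hf]) (hf _),
    Nat.factorization_mul (hf _) (hf _), Nat.factorization_mul (hf _) (hl _)]
  simp only [Finsupp.add_apply]
  have hmono : ∀ m ≤ 6 * k, p.log m < p.log (6 * k) + 1 := fun m hm =>
    Nat.lt_succ_of_le (Nat.log_mono_right hm)
  rw [factorization_lcmUpto _ hp, factorization_lcmUpto _ hp,
    factorization_factorial hp (hmono (3 * k) (by omega)),
    factorization_factorial hp (hmono (2 * k) (by omega)),
    factorization_factorial hp (hmono k (by omega)),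
    factorization_factorial hp (hmono (6 * k) le_rfl)]
  have h1 : p.log (6 * k) = ∑ i ∈ Finset.Ico 1 (p.log (6 * k) + 1), 1 := by simp
  have h2 : ∑ i ∈ Finset.Ico 1 (p.log (6 * k) + 1), (if p ^ i ≤ k then 1 else 0) ≤ p.log k := by
    rw [Finset.sum_boole]
    have : (Finset.filter (fun i => p ^ i ≤ k) (Finset.Ico 1 (p.log (6 * k) + 1))) ⊆
        Finset.Ico 1 (p.log k + 1) := by
      intro i hi
      simp only [Finset.mem_filter, Finset.mem_Ico] at hi ⊢
      exact ⟨hi.1.1, Nat.lt_succ_of_le (Nat.le_log_of_pow_le hp.one_lt hi.2)⟩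
    simpa using Finset.card_le_card this
  refine le_trans ?_ (Nat.add_le_add_left h2 _)
  nth_rw 1 [h1]
  rw [← Finset.sum_add_distrib, ← Finset.sum_add_distrib, ← Finset.sum_add_distrib,
    ← Finset.sum_add_distrib]
  refine Finset.sum_le_sum fun i hi => ?_
  have hi' := Finset.mem_Ico.1 hi
  have hk : 6 * k ≠ 0 := by
    rintro h0
    rw [h0] at hi'
    simp at hi'
    omega
  have hq : p ^ i ≤ 6 * k := Nat.pow_le_of_le_log hk (by omega)
  have hq0 : 0 < p ^ i := pow_pos hp.pos i
  generalize p ^ i = q at hq hq0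
  have hF : 1 ≤ 6 * k / q := (Nat.one_le_div_iff hq0).2 hq
  have hA : 2 * (3 * k / q) ≤ 6 * k / q := by
    rw [Nat.le_div_iff_mul_le hq0]; nlinarith [Nat.div_mul_le_self (3 * k) q]
  have hB : 3 * (2 * k / q) ≤ 6 * k / q := by
    rw [Nat.le_div_iff_mul_le hq0]; nlinarith [Nat.div_mul_le_self (2 * k) q]
  have hC : 6 * (k / q) ≤ 6 * k / q := by
    rw [Nat.le_div_iff_mul_le hq0]; nlinarith [Nat.div_mul_le_self k q]
  -- If `q > k`, then `k / q = 0`, and `6k/q ≥ 1` forces it to exceed `3k/q + 2k/q` because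
  -- `1/2 + 1/3 < 1`.
  split_ifs with hqk
  · omega
  · rw [Nat.div_eq_of_lt (not_le.1 hqk)]
    omega

open Nat in
theorem factorial_six_mul_le (k : ℕ) :
    (6 * k)! ≤ 432 ^ k * ((3 * k)! * (2 * k)! * k !) := by
  induction k with
  | zero => simp
  | succ k ih =>
    have e6 : 6 * (k + 1) = 6 * k + 5 + 1 := by ring
    have e3 : 3 * (k + 1) = 3 * k + 2 + 1 := by ring
    have e2 : 2 * (k + 1) = 2 * k + 1 + 1 := by ring
    rw [e6, e3, e2]
    simp only [Nat.factorial_succ]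
    generalize (6 * k)! = a at *
    generalize (3 * k)! = b at *
    generalize (2 * k)! = c at *
    generalize k ! = d at *
    have h1 : (6 * k + 1) * (6 * k + 5) ≤ 36 * (k + 1) ^ 2 := by nlinarith
    calc _ = 24 * ((3 * k + 1) * (3 * k + 2) * (3 * k + 3) * (2 * k + 1)) *
          ((6 * k + 1) * (6 * k + 5)) * a := by ring
      _ ≤ 24 * ((3 * k + 1) * (3 * k + 2) * (3 * k + 3) * (2 * k + 1)) *
          (36 * (k + 1) ^ 2) * (432 ^ k * (b * c * d)) := by gcongr
      _ = _ := by ring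

open Nat in
theorem lcmUpto_six_mul_le (k : ℕ) : lcmUpto (6 * k) ≤ 432 ^ k * lcmUpto k := by
  have hpos : 0 < (3 * k)! * (2 * k)! * k ! := by positivity
  have h1 := Nat.le_of_dvd (Nat.mul_pos (factorial_pos _) (lcmUpto_pos _)) (lcmUpto_mul_dvd k)
  have h2 := Nat.mul_le_mul_right (lcmUpto k) (factorial_six_mul_le k)
  refine Nat.le_of_mul_le_mul_right (h1.trans (h2.trans (le_of_eq ?_))) hpos
  ring

theorem lcmUpto_mono {m n : ℕ} (h : m ≤ n) : Nat.lcmUpto m ≤ Nat.lcmUpto n :=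
  Nat.le_of_dvd (Nat.lcmUpto_pos n)
    (Finset.lcm_mono (Finset.Icc_subset_Icc_right h))

/-- Strong induction through `lcmUpto_six_mul_le`. Rounding `n` up to a multiple of `6` costs a
factor `4 ^ 5 = 1024`, which is absorbed by `(4096 / 1728) ^ k` once `k ≥ 9`; the cases `n < 49` are
computed. -/
theorem lcmUpto_le_four_pow (n : ℕ) : Nat.lcmUpto n ≤ 4 ^ n := by
  induction n using Nat.strong_induction_on with
  | _ n ih =>
    rcases lt_or_ge n 49 with hn | hn
    · have : ∀ n < 49, Nat.lcmUpto n ≤ 4 ^ n := by decide +kernel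
      exact this n hn
    · obtain ⟨k, hk1, hk2⟩ : ∃ k, n ≤ 6 * k ∧ 6 * k ≤ n + 5 := ⟨(n + 5) / 6, by omega, by omega⟩
      have h9 : 9 ≤ k := by omega
      have h3 : 1024 * 1728 ^ k ≤ 4096 ^ k := by
        obtain ⟨j, rfl⟩ := Nat.exists_eq_add_of_le h9
        have : 1728 ^ j ≤ 4096 ^ j := Nat.pow_le_pow_left (by norm_num) j
        rw [pow_add, pow_add]
        calc _ = (1024 * 1728 ^ 9) * 1728 ^ j := by ring
          _ ≤ 4096 ^ 9 * 4096 ^ j := Nat.mul_le_mul (by norm_num) this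
      have h4 : Nat.lcmUpto n * 1024 ≤ 4 ^ n * 1024 :=
        calc Nat.lcmUpto n * 1024 ≤ (432 ^ k * 4 ^ k) * 1024 := by
              have := (lcmUpto_mono hk1).trans ((lcmUpto_six_mul_le k).trans
                (Nat.mul_le_mul_left _ (ih k (by omega))))
              omega
          _ = 1024 * 1728 ^ k := by rw [← mul_pow]; ring
          _ ≤ 4096 ^ k := h3
          _ = 4 ^ (6 * k) := by rw [pow_mul]; norm_num
          _ ≤ 4 ^ (n + 5) := Nat.pow_le_pow_right (by norm_num) hk2
          _ = _ := by rw [pow_add]; norm_num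
      omega

theorem lcmUpto_six_mul_le_pow (k : ℕ) : Nat.lcmUpto (6 * k) ≤ 1728 ^ k :=
  (lcmUpto_six_mul_le k).trans ((Nat.mul_le_mul_left _ (lcmUpto_le_four_pow k)).trans
    (le_of_eq (by rw [← mul_pow]; norm_num)))

section

open Polynomial

/-! ### Arithmetic of the approximating polynomials -/

/-- The integer polynomial `(X - 8)^(2k) (X - 9)^(4k) (X - 12)^(6k)`. Dividing it by `t ^ (6k+1)`
and integrating between two of its roots gives a linear form in `1` and the logarithm of the
quotient of these roots, and the coefficient of the logarithm is the middle coefficient whichever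
roots are taken. -/
noncomputable def padeNum (k : ℕ) : ℤ[X] :=
  (X - C 8) ^ (2 * k) * (X - C 9) ^ (4 * k) * (X - C 12) ^ (6 * k)

theorem padeNum_natDegree_lt (k : ℕ) : (padeNum k).natDegree < 12 * k + 1 := by
  refine Nat.lt_succ_of_le ?_
  unfold padeNum
  compute_degree!
  omega

theorem dvd_coeff_of_comp {P Q : ℤ[X]} {x c : ℤ} (h : P.comp (C x * X) = C c * Q) (i : ℕ) :
    c ∣ P.coeff i * x ^ i := by
  have := congrArg (fun R => R.coeff i) h
  simp only [comp_C_mul_X_coeff, coeff_C_mul] at this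
  exact ⟨_, this⟩

/-- Substituting `8 X` for `X` makes `padeNum k` divisible by `8 ^ (6k)`: the factor vanishing at
`8` contributes `8 ^ (2k)` and the factor vanishing at `12` contributes `4 ^ (6k)`. Hence evaluating
`coeff i * t ^ (i - 6k)` at `t = 8` gives an integer, also for `i < 6k`. -/
theorem padeNum_dvd_eight (k i : ℕ) : (8 : ℤ) ^ (6 * k) ∣ (padeNum k).coeff i * 8 ^ i := by
  refine dvd_coeff_of_comp
    (Q := (X - 1) ^ (2 * k) * (8 * X - 9) ^ (4 * k) * (2 * X - 3) ^ (6 * k)) ?_ i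
  have e : (8 : ℤ) ^ (6 * k) = 8 ^ (2 * k) * 4 ^ (6 * k) := by
    rw [show (8 : ℤ) = 2 ^ 3 by norm_num, show (4 : ℤ) = 2 ^ 2 by norm_num]
    simp only [← pow_mul, ← pow_add]
    congr 1; ring
  rw [e]
  simp only [padeNum, mul_comp, pow_comp, sub_comp, X_comp, C_comp, C_mul, C_pow]
  rw [show (C 8 * X - C 8 : ℤ[X]) = C 8 * (X - 1) by ring,
    show (C 8 * X - C 12 : ℤ[X]) = C 4 * (2 * X - 3) by simp only [map_ofNat]; ring]
  simp only [mul_pow, map_ofNat]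
  ring

theorem padeNum_dvd_nine (k i : ℕ) : (9 : ℤ) ^ (6 * k) ∣ (padeNum k).coeff i * 9 ^ i := by
  refine dvd_coeff_of_comp
    (Q := C (3 ^ (2 * k)) * ((9 * X - 8) ^ (2 * k) * (X - 1) ^ (4 * k) * (3 * X - 4) ^ (6 * k)))
    ?_ i
  rw [← mul_assoc, ← C_mul]
  have e : (9 : ℤ) ^ (6 * k) * 3 ^ (2 * k) = 9 ^ (4 * k) * 3 ^ (6 * k) := by
    rw [show (9 : ℤ) = 3 ^ 2 by norm_num]
    simp only [← pow_mul, ← pow_add]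
    congr 1; ring
  rw [e]
  simp only [padeNum, mul_comp, pow_comp, sub_comp, X_comp, C_comp, C_mul, C_pow]
  rw [show (C 9 * X - C 9 : ℤ[X]) = C 9 * (X - 1) by ring,
    show (C 9 * X - C 12 : ℤ[X]) = C 3 * (3 * X - 4) by simp only [map_ofNat]; ring]
  simp only [mul_pow, map_ofNat]
  ring

theorem padeNum_dvd_twelve (k i : ℕ) : (12 : ℤ) ^ (6 * k) ∣ (padeNum k).coeff i * 12 ^ i := by
  refine dvd_coeff_of_comp
    (Q := (12 * X - 8) ^ (2 * k) * (12 * X - 9) ^ (4 * k) * (X - 1) ^ (6 * k)) ?_ i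
  simp only [padeNum, mul_comp, pow_comp, sub_comp, X_comp, C_comp, C_pow]
  rw [show (C 12 * X - C 12 : ℤ[X]) = C 12 * (X - 1) by ring]
  simp only [mul_pow, map_ofNat]
  ring

/-- Up to signs, the coefficients are those of `(X + 8)^(2k) (X + 9)^(4k) (X + 12)^(6k)`, so the
middle one is at most the value of this polynomial at `r` divided by `r ^ (6k)`. The choice
`r = 10` is nearly optimal: `18 ^ 2 * 19 ^ 4 * 22 ^ 6 / 10 ^ 6 < 4788200000`. -/
theorem padeNum_coeff_bound (k : ℕ) : |(padeNum k).coeff (6 * k)| ≤ 4788200000 ^ k := by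
  have hcomp : (padeNum k).comp (C (-1) * X) =
      ((X + C 8) ^ (2 * k) * (X + C 9) ^ (4 * k) * (X + C 12) ^ (6 * k) : ℕ[X]).map
        (Nat.castRingHom ℤ) := by
    simp only [padeNum, mul_comp, pow_comp, sub_comp, X_comp, C_comp, Polynomial.map_mul,
      Polynomial.map_pow, Polynomial.map_add, map_X, map_C]
    rw [show (C (-1) * X - C 8 : ℤ[X]) = -(X + C 8) by simp; ring,
      show (C (-1) * X - C 9 : ℤ[X]) = -(X + C 9) by simp; ring,
      show (C (-1) * X - C 12 : ℤ[X]) = -(X + C 12) by simp; ring,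
      Even.neg_pow ⟨k, by ring⟩, Even.neg_pow ⟨2 * k, by ring⟩, Even.neg_pow ⟨3 * k, by ring⟩]
    simp
  set S : ℕ[X] := (X + C 8) ^ (2 * k) * (X + C 9) ^ (4 * k) * (X + C 12) ^ (6 * k) with hS
  have hc := congrArg (fun R => R.coeff (6 * k)) hcomp
  simp only [comp_C_mul_X_coeff, coeff_map] at hc
  rw [Even.neg_one_pow ⟨3 * k, by ring⟩, mul_one] at hc
  rw [hc]
  have h1 : S.coeff (6 * k) * 10 ^ (6 * k) ≤ S.eval 10 := by
    rw [eval_eq_sum]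
    by_cases h0 : S.coeff (6 * k) = 0
    · simp [h0]
    · exact Finset.single_le_sum (f := fun i => S.coeff i * 10 ^ i) (fun _ _ => Nat.zero_le _)
        (mem_support_iff.2 h0)
  have h2 : S.eval 10 ≤ 4788200000 ^ k * 10 ^ (6 * k) := by
    simp only [hS, eval_mul, eval_pow, eval_add, eval_X, eval_C]
    rw [pow_mul, pow_mul, pow_mul, pow_mul, ← mul_pow, ← mul_pow, ← mul_pow]
    exact Nat.pow_le_pow_left (by norm_num) k
  have h3 : S.coeff (6 * k) ≤ 4788200000 ^ k :=
    Nat.le_of_mul_le_mul_right (h1.trans h2) (by positivity)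
  simpa using (by exact_mod_cast h3 : (S.coeff (6 * k) : ℤ) ≤ 4788200000 ^ k)

theorem exists_int_of_dvd {d c x D : ℤ} {i m : ℕ} (hx : (x : ℝ) ≠ 0) (h : x ^ m ∣ c * x ^ i)
    (hd : d = (i : ℤ) - m) (hd0 : d ≠ 0) (hD : d ∣ D) :
    ∃ p : ℤ, (D : ℝ) * (c * ((x : ℝ) ^ d / d)) = p := by
  obtain ⟨e, he⟩ := h
  obtain ⟨f, rfl⟩ := hD
  refine ⟨f * e, ?_⟩
  have hd' : (d : ℝ) ≠ 0 := by exact_mod_cast hd0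
  have he' : (c : ℝ) * (x : ℝ) ^ i = (x : ℝ) ^ m * e := by exact_mod_cast he
  have h2 : (c : ℝ) * (x : ℝ) ^ d = e := by
    rw [hd, zpow_sub₀ hx, zpow_natCast, zpow_natCast, ← mul_div_assoc, he']
    field_simp
  push_cast
  rw [← h2]
  field_simp

theorem int_dvd_lcmUpto {d : ℤ} {n : ℕ} (h0 : d ≠ 0) (h : |d| ≤ n) :
    d ∣ (Nat.lcmUpto n : ℤ) := by
  rw [← Int.natAbs_dvd_natAbs, Int.natAbs_natCast]
  refine Finset.dvd_lcm (f := id) (Finset.mem_Icc.2 ⟨?_, ?_⟩)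
  · exact Int.natAbs_pos.2 h0
  · exact_mod_cast (Int.natCast_natAbs d).le.trans h

/-- Integrating `P(t) / t ^ (m+1)` termwise over `[a, b]`, the coefficient of index `m` produces the
logarithm, and every other term has the form `P_i (b ^ (i-m) - a ^ (i-m)) / (i - m)`, whose
denominator divides `lcm (1, ..., m)` under the divisibility assumptions. -/
theorem exists_linear_form (P : ℤ[X]) (m : ℕ) (hP : P.natDegree < 2 * m + 1) (a b : ℤ)
    (ha : 0 < a) (hab : a < b)
    (hda : ∀ i, a ^ m ∣ P.coeff i * a ^ i) (hdb : ∀ i, b ^ m ∣ P.coeff i * b ^ i) :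
    ∃ p : ℤ, (Nat.lcmUpto m : ℝ) * (∫ t in (a : ℝ)..b, aeval t P / t ^ (m + 1)) =
      (Nat.lcmUpto m : ℝ) * P.coeff m * Real.log (b / a) - p := by
  have ha' : (0 : ℝ) < a := by exact_mod_cast ha
  have hb' : (0 : ℝ) < b := by exact_mod_cast ha.trans hab
  have hab' : (a : ℝ) ≤ b := by exact_mod_cast hab.le
  have h0 : (0 : ℝ) ∉ Set.uIcc (a : ℝ) b := by
    rw [Set.uIcc_of_le hab']; intro h; exact absurd h.1 (not_le.2 ha')
  have hI : (∫ t in (a : ℝ)..b, aeval t P / t ^ (m + 1)) =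
      ∑ i ∈ Finset.range (2 * m + 1),
        (P.coeff i : ℝ) * ∫ t in (a : ℝ)..b, t ^ ((i : ℤ) - m - 1) := by
    simp_rw [← intervalIntegral.integral_const_mul]
    rw [← intervalIntegral.integral_finsetSum]
    · refine intervalIntegral.integral_congr fun t ht => ?_
      have ht0 : t ≠ 0 := fun h => h0 (h ▸ ht)
      rw [aeval_def, eval₂_eq_sum_range' _ hP, Finset.sum_div]
      refine Finset.sum_congr rfl fun i _ => ?_
      rw [show (i : ℤ) - m - 1 = (i : ℤ) - ((m + 1 : ℕ) : ℤ) by push_cast; ring,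
        zpow_sub₀ ht0, zpow_natCast, zpow_natCast]
      simp [mul_div_assoc]
    · intro i _
      refine ((intervalIntegral.intervalIntegrable_zpow (Or.inr h0)).const_mul _)
  rw [hI, Finset.mul_sum]
  have hterm : ∀ i ∈ (Finset.range (2 * m + 1)).erase m, ∃ p : ℤ,
      (Nat.lcmUpto m : ℝ) * ((P.coeff i : ℝ) * ∫ t in (a : ℝ)..b, t ^ ((i : ℤ) - m - 1)) = p := by
    intro i hi
    rw [Finset.mem_erase, Finset.mem_range] at hi
    have hd0 : (i : ℤ) - m ≠ 0 := by have := hi.1; omega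
    have hD := int_dvd_lcmUpto (n := m) hd0 (by rw [abs_le]; have := hi.2; omega)
    obtain ⟨p, hp⟩ := exists_int_of_dvd hb'.ne' (hdb i) rfl hd0 hD
    obtain ⟨q, hq⟩ := exists_int_of_dvd ha'.ne' (hda i) rfl hd0 hD
    refine ⟨p - q, ?_⟩
    rw [integral_zpow (Or.inr ⟨by omega, h0⟩)]
    push_cast at hp hq ⊢
    rw [← hp, ← hq]
    rw [sub_add_cancel, sub_add_cancel]
    ring
  choose! p hp using hterm
  refine ⟨-∑ i ∈ (Finset.range (2 * m + 1)).erase m, p i, ?_⟩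
  rw [← Finset.add_sum_erase _ _ (Finset.mem_range.2 (by omega : m < 2 * m + 1)),
    Finset.sum_congr rfl hp]
  have : (∫ t in (a : ℝ)..b, t ^ ((m : ℤ) - m - 1)) = Real.log (b / a) := by
    rw [← integral_inv h0]
    simp
  rw [this]
  push_cast
  ring

/-! ### Size of the integrals -/

/-- The rational function whose `k`-th power, divided by `t`, is the integrand
`padeNum k / t ^ (6k+1)`. -/
noncomputable def padeFun (t : ℝ) : ℝ := ((t - 8) * (t - 9) ^ 2 * (12 - t) ^ 3 / t ^ 3) ^ 2

/-- Nonnegativity of the Bernstein basis on `[p, q]`. The polynomial inequalities below follow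
linearly from it because the polynomials in question have nonnegative Bernstein coefficients of
degree `6` on each of the chosen subintervals. -/
theorem bern (t p q : ℝ) (hp : p ≤ t) (hq : t ≤ q) (i j : ℕ) : 0 ≤ (t - p) ^ i * (q - t) ^ j :=
  mul_nonneg (pow_nonneg (by linarith) _) (pow_nonneg (by linarith) _)

theorem poly_le_left {t : ℝ} (h1 : 8 ≤ t) (h2 : t ≤ 9) :
    (t - 8) * (t - 9) ^ 2 * (12 - t) ^ 3 ≤ 0.0136 * t ^ 3 := by
  rcases le_total t 8.25 with h | h
  · have B := bern t 8 8.25 h1 h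
    linarith [B 6 0, B 5 1, B 4 2, B 3 3, B 2 4, B 1 5, B 0 6]
  · rcases le_total t 8.5 with h' | h'
    · have B := bern t 8.25 8.5 h h'
      linarith [B 6 0, B 5 1, B 4 2, B 3 3, B 2 4, B 1 5, B 0 6]
    · have B := bern t 8.5 9 h' h2
      linarith [B 6 0, B 5 1, B 4 2, B 3 3, B 2 4, B 1 5, B 0 6]

theorem poly_le_right {t : ℝ} (h1 : 9 ≤ t) (h2 : t ≤ 12) :
    (t - 8) * (t - 9) ^ 2 * (12 - t) ^ 3 ≤ 0.018 * t ^ 3 := by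
  rcases le_total t 10 with h | h
  · have B := bern t 9 10 h1 h
    linarith [B 6 0, B 5 1, B 4 2, B 3 3, B 2 4, B 1 5, B 0 6]
  · rcases le_total t 10.5 with h' | h'
    · have B := bern t 10 10.5 h h'
      linarith [B 6 0, B 5 1, B 4 2, B 3 3, B 2 4, B 1 5, B 0 6]
    · have B := bern t 10.5 12 h' h2
      linarith [B 6 0, B 5 1, B 4 2, B 3 3, B 2 4, B 1 5, B 0 6]

theorem padeFun_le {t c : ℝ} (h1 : 8 ≤ t) (h2 : t ≤ 12)
    (h : (t - 8) * (t - 9) ^ 2 * (12 - t) ^ 3 ≤ c * t ^ 3) : padeFun t ≤ c ^ 2 := by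
  have h3 : 0 ≤ (t - 8) * (t - 9) ^ 2 * (12 - t) ^ 3 := by
    have := sub_nonneg.2 h1
    have := sub_nonneg.2 h2
    positivity
  have ht : 0 < t := by linarith
  unfold padeFun
  refine pow_le_pow_left₀ (by positivity) ?_ 2
  rwa [div_le_iff₀ (by positivity)]

/-- The interval `[10.26, 10.27]` lies close to the maximum of `padeFun` on `[9, 12]`, so that
`0.00029` exceeds the upper bound `0.0136 ^ 2` valid on `[8, 9]`. -/
theorem le_padeFun {t : ℝ} (h1 : 10.26 ≤ t) (h2 : t ≤ 10.27) : 0.00029 ≤ padeFun t := by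
  have h3 : (2.26 : ℝ) * 1.26 ^ 2 * 1.73 ^ 3 / 10.27 ^ 3 ≤
      (t - 8) * (t - 9) ^ 2 * (12 - t) ^ 3 / t ^ 3 := by
    have ha : 2.26 ≤ t - 8 := by linarith
    have hb : 1.26 ≤ t - 9 := by linarith
    have hc : 1.73 ≤ 12 - t := by linarith
    have ha' : 0 ≤ t - 8 := by linarith
    have hc' : 0 ≤ 12 - t := by linarith
    have ht : 0 < t := by linarith
    gcongr
  unfold padeFun
  refine le_trans (by norm_num) (pow_le_pow_left₀ (by norm_num) h3 2)

theorem padeFun_nonneg (t : ℝ) : 0 ≤ padeFun t := sq_nonneg _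

theorem continuousOn_pade (k : ℕ) {a b : ℝ} (ha : 0 < a) :
    ContinuousOn (fun t => padeFun t ^ k / t) (Set.Icc a b) := by
  unfold padeFun
  have : ∀ t ∈ Set.Icc a b, t ≠ 0 := fun t ht => (ha.trans_le ht.1).ne'
  have : ∀ t ∈ Set.Icc a b, t ^ 3 ≠ 0 := fun t ht => pow_ne_zero 3 (this t ht)
  fun_prop (disch := assumption)

theorem abs_integral_pade_le (k : ℕ) {a b c : ℝ} (ha : 0 < a) (hab : a ≤ b)
    (h : ∀ t, a ≤ t → t ≤ b → padeFun t ≤ c) :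
    |∫ t in a..b, padeFun t ^ k / t| ≤ c ^ k / a * (b - a) := by
  have := intervalIntegral.norm_integral_le_of_norm_le_const (a := a) (b := b)
    (f := fun t => padeFun t ^ k / t) (C := c ^ k / a) ?_
  · rwa [abs_of_nonneg (sub_nonneg.2 hab), Real.norm_eq_abs] at this
  · intro t ht
    rw [Set.uIoc_of_le hab] at ht
    have h1 := h t ht.1.le ht.2
    have h2 := padeFun_nonneg t
    have ht0 : 0 < t := ha.trans ht.1
    rw [Real.norm_eq_abs, abs_of_nonneg (by positivity)]
    have : 0 ≤ c := h2.trans h1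
    gcongr
    exact ht.1.le

theorem le_integral_pade (k : ℕ) :
    0.0009 * 0.00029 ^ k ≤ ∫ t in (9 : ℝ)..12, padeFun t ^ k / t := by
  have hintegrable : ∀ a b : ℝ, 0 < a → a ≤ b → IntervalIntegrable (fun t => padeFun t ^ k / t)
      MeasureTheory.volume a b := fun a b ha hab =>
    (continuousOn_pade k ha).intervalIntegrable_of_Icc hab
  have h1 : (∫ t in (10.26 : ℝ)..10.27, padeFun t ^ k / t) ≤
      ∫ t in (9 : ℝ)..12, padeFun t ^ k / t := by
    refine intervalIntegral.integral_mono_interval (by norm_num) (by norm_num) (by norm_num) ?_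
      (hintegrable _ _ (by norm_num) (by norm_num))
    refine (MeasureTheory.ae_restrict_iff' measurableSet_Ioc).2 (Filter.Eventually.of_forall ?_)
    intro t ht
    have := padeFun_nonneg t
    have : 0 < t := lt_trans (by norm_num) ht.1
    simp only [Pi.zero_apply]
    positivity
  have h2 : (∫ t in (10.26 : ℝ)..10.27, (0.00029 : ℝ) ^ k / 11) ≤
      ∫ t in (10.26 : ℝ)..10.27, padeFun t ^ k / t := by
    refine intervalIntegral.integral_mono_on (by norm_num) (by simp)
      (hintegrable _ _ (by norm_num) (by norm_num)) ?_
    intro t ht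
    have h3 := le_padeFun ht.1 ht.2
    have : 0 < t := lt_of_lt_of_le (by norm_num) ht.1
    have : t ≤ 11 := ht.2.trans (by norm_num)
    have := padeFun_nonneg t
    gcongr
  rw [intervalIntegral.integral_const] at h2
  refine le_trans ?_ (h2.trans h1)
  have : (0 : ℝ) < 0.00029 ^ k := by positivity
  rw [smul_eq_mul]
  linarith

/-! ### Linear forms in the logarithms of 9/8 and 4/3 -/

theorem aeval_padeNum_div (k : ℕ) (t : ℝ) :
    aeval t (padeNum k) / t ^ (6 * k + 1) = padeFun t ^ k / t := by
  have h : aeval t (padeNum k) =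
      (t - 8) ^ (2 * k) * (t - 9) ^ (4 * k) * (t - 12) ^ (6 * k) := by
    simp only [padeNum, map_mul, map_pow, map_sub, aeval_X, aeval_C]
    simp
  rw [h, padeFun, pow_succ, ← div_div]
  congr 1
  rw [show t - 12 = -(12 - t) by ring, Even.neg_pow ⟨3 * k, by ring⟩]
  simp only [pow_mul, ← mul_pow, ← div_pow]
  congr 1
  ring

theorem exists_linear_form_padeFun (k : ℕ) (a b : ℤ) (ha : 0 < a) (hab : a < b)
    (hda : ∀ i, a ^ (6 * k) ∣ (padeNum k).coeff i * a ^ i)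
    (hdb : ∀ i, b ^ (6 * k) ∣ (padeNum k).coeff i * b ^ i) :
    ∃ p : ℤ, (Nat.lcmUpto (6 * k) : ℝ) * (∫ t in (a : ℝ)..b, padeFun t ^ k / t) =
      (Nat.lcmUpto (6 * k) : ℝ) * (padeNum k).coeff (6 * k) * Real.log (b / a) - p := by
  obtain ⟨p, hp⟩ := exists_linear_form (padeNum k) (6 * k)
    (by have := padeNum_natDegree_lt k; omega) a b ha hab hda hdb
  refine ⟨p, ?_⟩
  rw [← hp]
  congr 1
  simp only [aeval_padeNum_div]

/-- The base `28000000000000` exceeds both `1728 * 4788200000` and `4788200000 / 0.00029`, the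
growth rates occurring in the two cases of the lower bound. -/
theorem exp_neg_mul_le (k : ℕ) : Real.exp (-(31 * k)) ≤ (1 / 28000000000000 : ℝ) ^ k := by
  have h1 : (28000000000000 : ℝ) ≤ Real.exp 31 := by
    have : Real.exp 31 = Real.exp 1 ^ 31 := by rw [← Real.exp_nat_mul]; norm_num
    rw [this]
    refine le_trans (by norm_num) (pow_le_pow_left₀ (by norm_num)
      (le_of_lt (lt_trans (by norm_num : (2.718 : ℝ) < 2.7182818283) Real.exp_one_gt_d9)) 31)
  have h2 : Real.exp (-(31 * k)) = (1 / Real.exp 31) ^ k := by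
    rw [Real.exp_neg, one_div, inv_pow, ← Real.exp_nat_mul]
    ring_nf
  rw [h2]
  gcongr

/-- Main lower bound for a linear form `Λ = h log (9/8) + l log (4/3)`. Let `c` be the middle
coefficient of `padeNum k`, `D = lcm (1, ..., 6k)`, and let `ε`, `δ` be the integrals over `[8, 9]`
and `[9, 12]`. Then `D c Λ = (h p + l r) + D (h ε + l δ)` with integers `p`, `r`. The second
summand is at most `1/2` in absolute value, so a nonzero integer part bounds `|Λ|` from below. If
the integer part is zero, then `c Λ = h ε + l δ`, which is bounded below because `δ` is much larger
than `ε`. -/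
theorem two_log_lower_bound (k : ℕ) (hk : 18 ≤ k) (h l : ℤ) (hl : l ≠ 0) (hhl : |h| ≤ 3 * |l|)
    (hH : 2 * |(l : ℝ)| ≤ (7 / 4) ^ k) :
    Real.exp (-(31 * k)) ≤ |h * Real.log (9 / 8) + l * Real.log (4 / 3)| := by
  obtain ⟨p, hp⟩ := exists_linear_form_padeFun k 8 9 (by norm_num) (by norm_num)
    (padeNum_dvd_eight k) (padeNum_dvd_nine k)
  obtain ⟨r, hr⟩ := exists_linear_form_padeFun k 9 12 (by norm_num) (by norm_num)
    (padeNum_dvd_nine k) (padeNum_dvd_twelve k)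
  push_cast at hp hr
  rw [show (12 / 9 : ℝ) = 4 / 3 by norm_num] at hr
  have hε := abs_integral_pade_le k (a := 8) (b := 9) (c := 0.0136 ^ 2) (by norm_num)
    (by norm_num) (fun t h1 h2 => padeFun_le h1 (by linarith) (poly_le_left h1 h2))
  have hδ := abs_integral_pade_le k (a := 9) (b := 12) (c := 0.018 ^ 2) (by norm_num)
    (by norm_num) (fun t h1 h2 => padeFun_le (by linarith) h2 (poly_le_right h1 h2))
  have hδ' := le_integral_pade k
  set ε := ∫ t in (8 : ℝ)..9, padeFun t ^ k / t
  set δ := ∫ t in (9 : ℝ)..12, padeFun t ^ k / t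
  set Λ := h * Real.log (9 / 8) + l * Real.log (4 / 3) with hΛ
  have hc : |((padeNum k).coeff (6 * k) : ℝ)| ≤ 4788200000 ^ k := by
    exact_mod_cast padeNum_coeff_bound k
  have hD : (Nat.lcmUpto (6 * k) : ℝ) ≤ 1728 ^ k := by exact_mod_cast lcmUpto_six_mul_le_pow k
  have hD0 : (0 : ℝ) < Nat.lcmUpto (6 * k) := by exact_mod_cast Nat.lcmUpto_pos _
  set D : ℝ := (Nat.lcmUpto (6 * k) : ℝ)
  set c : ℝ := ((padeNum k).coeff (6 * k) : ℝ)
  have hhl' : |(h : ℝ)| ≤ 3 * |(l : ℝ)| := by exact_mod_cast hhl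
  have hl1 : (1 : ℝ) ≤ |(l : ℝ)| := by exact_mod_cast Int.one_le_abs hl
  have key : D * c * Λ = ((h * p + l * r : ℤ) : ℝ) + D * (h * ε + l * δ) := by
    push_cast
    linear_combination (-(h : ℝ)) * hp - (l : ℝ) * hr
  have hexp := exp_neg_mul_le k
  by_cases hz : h * p + l * r = 0
  · rw [hz, Int.cast_zero, zero_add, mul_assoc] at key
    have key' : c * Λ = h * ε + l * δ := mul_left_cancel₀ hD0.ne' key
    have h1 : |(l : ℝ)| * δ - |(h : ℝ)| * |ε| ≤ |c| * |Λ| := by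
      rw [← abs_mul c, key']
      have h2 : |(l : ℝ) * δ| = |(l : ℝ)| * δ := by
        rw [abs_mul, abs_of_nonneg (a := δ)]
        exact le_trans (by positivity) hδ'
      have h3 : |(h : ℝ) * ε| = |(h : ℝ)| * |ε| := abs_mul _ _
      rw [← h2, ← h3]
      have := abs_sub_abs_le_abs_sub ((l : ℝ) * δ) (-((h : ℝ) * ε))
      rw [abs_neg] at this
      rwa [sub_neg_eq_add, add_comm ((l : ℝ) * δ)] at this
    -- `0.0136 ^ 2 < 0.00019`; the assumption `18 ≤ k` makes the quotient of the two powers this small.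
    have h4 : (0.0136 ^ 2 : ℝ) ^ k ≤ 0.0004 * 0.00029 ^ k := by
      obtain ⟨j, rfl⟩ := Nat.exists_eq_add_of_le hk
      rw [pow_add, pow_add, ← mul_assoc]
      gcongr <;> norm_num
    have h5 : 0.0007 * 0.00029 ^ k ≤ |c| * |Λ| := by
      refine le_trans ?_ h1
      have h6 : |(h : ℝ)| * |ε| ≤ 3 * |(l : ℝ)| * (0.00005 * 0.00029 ^ k) := by
        gcongr
        linarith
      have h7 : |(l : ℝ)| * (0.0009 * 0.00029 ^ k) ≤ |(l : ℝ)| * δ := by gcongr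
      have h8 : (0.0007 : ℝ) * 0.00029 ^ k ≤ |(l : ℝ)| * (0.0007 * 0.00029 ^ k) :=
        le_mul_of_one_le_left (by positivity) hl1
      have h9 : (0 : ℝ) ≤ |(l : ℝ)| * 0.00029 ^ k := by positivity
      linarith
    have h6 : (4788200000 : ℝ) ^ k * (1 / 28000000000000 : ℝ) ^ k ≤ 0.0007 * 0.00029 ^ k := by
      rw [← mul_pow]
      obtain ⟨j, rfl⟩ := Nat.exists_eq_add_of_le hk
      rw [pow_add, pow_add, ← mul_assoc]
      gcongr <;> norm_num
    have h7 : |c| * |Λ| ≤ 4788200000 ^ k * |Λ| := by gcongr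
    exact hexp.trans (le_of_mul_le_mul_left (h6.trans (h5.trans h7)) (by positivity))
  · have h1 : (1 : ℝ) ≤ |((h * p + l * r : ℤ) : ℝ)| := by exact_mod_cast Int.one_le_abs hz
    have h2 : |D * (h * ε + l * δ)| ≤ 1 / 2 := by
      have ha : |ε| ≤ (0.018 ^ 2) ^ k / 8 := by
        have : (0.0136 ^ 2 : ℝ) ^ k ≤ (0.018 ^ 2) ^ k := by gcongr; norm_num
        linarith
      have hb : |δ| ≤ (0.018 ^ 2) ^ k / 3 := by linarith
      rw [abs_mul, abs_of_pos hD0]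
      calc D * |h * ε + l * δ| ≤ 1728 ^ k * (3 * |(l : ℝ)| * ((0.018 ^ 2) ^ k / 8) +
            |(l : ℝ)| * ((0.018 ^ 2) ^ k / 3)) := by
            gcongr
            refine (abs_add_le _ _).trans ?_
            rw [abs_mul, abs_mul]
            gcongr
        _ = 17 / 24 * |(l : ℝ)| * (1728 * 0.018 ^ 2) ^ k := by rw [mul_pow]; ring
        -- `1728 * 0.018 ^ 2 < 4 / 7`, which is why the size of `l` is measured by `(7 / 4) ^ k`
        _ ≤ 17 / 24 * |(l : ℝ)| * (4 / 7) ^ k := by gcongr; norm_num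
        _ ≤ 17 / 24 * ((7 / 4) ^ k / 2) * (4 / 7) ^ k := by gcongr; linarith
        _ = 17 / 48 * ((7 / 4) * (4 / 7)) ^ k := by rw [mul_pow]; ring
        _ ≤ 1 / 2 := by norm_num
    have h3 : 1 / 2 ≤ |D * c * Λ| := by
      rw [key]
      have := abs_sub_abs_le_abs_sub ((h * p + l * r : ℤ) : ℝ) (-(D * (h * ε + l * δ)))
      rw [abs_neg, sub_neg_eq_add] at this
      linarith
    rw [abs_mul, abs_mul, abs_of_pos hD0] at h3
    have h4 : D * |c| * |Λ| ≤ (1728 * 4788200000) ^ k * |Λ| := by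
      rw [mul_pow]; gcongr
    have h6 : (1728 * 4788200000 : ℝ) ^ k * (1 / 28000000000000 : ℝ) ^ k ≤ 1 / 2 := by
      rw [← mul_pow]
      obtain ⟨j, rfl⟩ := Nat.exists_eq_add_of_le hk
      rw [pow_add]
      have : (1728 * 4788200000 * (1 / 28000000000000) : ℝ) ^ j ≤ 1 :=
        pow_le_one₀ (by norm_num) (by norm_num)
      refine le_trans (mul_le_of_le_one_right (by positivity) this) (by norm_num)
    exact hexp.trans (le_of_mul_le_mul_left (h6.trans (h3.trans h4)) (by positivity))

end

/-! ### Linear forms in the logarithms of 2 and 3 -/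

/-- The lower bound `two_log_lower_bound`, in terms of `log 2` and `log 3`, with `k` chosen as
the least integer at least `2 log (12 X)`; since `exp (1/2) < 7/4`, this gives
`(7/4) ^ k ≥ 12 X`. When `|Λ| < 1/20`, the coefficients `h` of `log (9/8)` and `l` of
`log (4/3)` automatically satisfy `l ≠ 0` and `|h| ≤ 3 |l|`. -/
theorem log_two_log_three_lower_bound {X : ℝ} (hX : 1000 ≤ X) (a b : ℤ)
    (ha : |(a : ℝ)| * Real.log 2 ≤ X) (hb : |(b : ℝ)| * Real.log 3 ≤ X)
    (h0 : a * Real.log 2 + b * Real.log 3 ≠ 0) :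
    Real.exp (-(62 * Real.log (12 * X) + 31)) ≤ |a * Real.log 2 + b * Real.log 3| := by
  have l2 := Real.log_two_gt_d9
  have e1 : Real.log (9 / 8) = 2 * Real.log 3 - 3 * Real.log 2 := by
    rw [Real.log_div (by norm_num) (by norm_num), show (9 : ℝ) = 3 ^ 2 by norm_num,
      show (8 : ℝ) = 2 ^ 3 by norm_num, Real.log_pow, Real.log_pow]
    norm_num
  have e2 : Real.log (4 / 3) = 2 * Real.log 2 - Real.log 3 := by
    rw [Real.log_div (by norm_num) (by norm_num), show (4 : ℝ) = 2 ^ 2 by norm_num,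
      Real.log_pow]
    norm_num
  have b1 : 1 / 9 ≤ Real.log (9 / 8) :=
    le_trans (by norm_num) (Real.one_sub_inv_le_log_of_pos (by norm_num))
  have b2 : Real.log (4 / 3) ≤ 1 / 3 :=
    (Real.log_le_sub_one_of_pos (by norm_num)).trans (by norm_num)
  have b3 : 0 ≤ Real.log (4 / 3) := Real.log_nonneg (by norm_num)
  have l3 : 1.05 < Real.log 3 := by linarith
  have hΛ : a * Real.log 2 + b * Real.log 3 =
      ((a + 2 * b : ℤ) : ℝ) * Real.log (9 / 8) + ((2 * a + 3 * b : ℤ) : ℝ) * Real.log (4 / 3) := by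
    rw [e1, e2]; push_cast; ring
  have hlX : |((2 * a + 3 * b : ℤ) : ℝ)| ≤ 6 * X := by
    have h1 : |(a : ℝ)| * 0.69 ≤ X := le_trans (by gcongr; linarith) ha
    have h2 : |(b : ℝ)| * 1.05 ≤ X := le_trans (by gcongr) hb
    push_cast
    refine (abs_add_le _ _).trans ?_
    rw [abs_mul, abs_mul, abs_two, abs_of_pos (by norm_num : (0 : ℝ) < 3)]
    linarith
  have hlog : 9 ≤ Real.log (12 * X) := by
    rw [Real.le_log_iff_exp_le (by positivity)]
    have : Real.exp 9 = Real.exp 1 ^ 9 := by rw [← Real.exp_nat_mul]; norm_num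
    rw [this]
    have := pow_le_pow_left₀ (Real.exp_pos 1).le
      (Real.exp_one_lt_d9.le.trans (by norm_num : (2.7182818286 : ℝ) ≤ 2.72)) 9
    exact this.trans (le_trans (by norm_num) (by linarith : (12000 : ℝ) ≤ 12 * X))
  rw [hΛ] at h0 ⊢
  generalize a + 2 * b = h at *
  generalize 2 * a + 3 * b = l at *
  set Λ := (h : ℝ) * Real.log (9 / 8) + (l : ℝ) * Real.log (4 / 3) with hΛ'
  rcases le_or_gt (1 / 20) |Λ| with hbig | hsmall
  · refine le_trans ?_ hbig
    have h1 : Real.exp (-(62 * Real.log (12 * X) + 31)) ≤ Real.exp (-(31 * (1 : ℕ))) :=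
      Real.exp_le_exp.2 (by push_cast; linarith)
    exact h1.trans ((exp_neg_mul_le 1).trans (by norm_num))
  have hl : l ≠ 0 := by
    rintro rfl
    simp only [Int.cast_zero, zero_mul, add_zero] at hΛ'
    have hh : h ≠ 0 := by
      rintro rfl
      simp at hΛ'
      exact h0 hΛ'
    have : (1 : ℝ) ≤ |(h : ℝ)| := by exact_mod_cast Int.one_le_abs hh
    rw [hΛ', abs_mul, abs_of_nonneg (by linarith : 0 ≤ Real.log (9 / 8))] at hsmall
    nlinarith
  have hhl : |h| ≤ 3 * |l| := by
    have h1 : |(h : ℝ)| * Real.log (9 / 8) ≤ |Λ| + |(l : ℝ)| * Real.log (4 / 3) := by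
      have : (h : ℝ) * Real.log (9 / 8) = Λ - l * Real.log (4 / 3) := by rw [hΛ']; ring
      have h2 := abs_sub Λ (l * Real.log (4 / 3))
      rw [← this, abs_mul, abs_mul, abs_of_nonneg b3,
        abs_of_nonneg (by linarith : 0 ≤ Real.log (9 / 8))] at h2
      exact h2
    have h2 : |(h : ℝ)| * (1 / 9) ≤ |(h : ℝ)| * Real.log (9 / 8) := by gcongr
    have h3 : |(l : ℝ)| * Real.log (4 / 3) ≤ |(l : ℝ)| * (1 / 3) := by gcongr
    have h4 : |(h : ℝ)| < 3 * |(l : ℝ)| + 1 := by linarith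
    have h5 : |h| < 3 * |l| + 1 := by exact_mod_cast h4
    omega
  set k := ⌈2 * Real.log (12 * X)⌉₊ with hk
  have hk1 : 2 * Real.log (12 * X) ≤ k := Nat.le_ceil _
  have hk2 : (k : ℝ) < 2 * Real.log (12 * X) + 1 := Nat.ceil_lt_add_one (by linarith)
  have hk18 : 18 ≤ k := by
    have : (18 : ℝ) ≤ k := by linarith
    exact_mod_cast this
  have hexp : 12 * X ≤ (7 / 4) ^ k := by
    have h1 : Real.exp (1 / 2) ≤ 7 / 4 := by
      have h2 : Real.exp (1 / 2) ^ 2 = Real.exp 1 := by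
        rw [← Real.exp_nat_mul]; norm_num
      have := Real.exp_one_lt_d9
      refine le_of_sq_le_sq ?_ (by norm_num)
      rw [h2]
      linarith
    calc 12 * X = Real.exp (Real.log (12 * X)) := (Real.exp_log (by positivity)).symm
      _ ≤ Real.exp (k * (1 / 2)) := Real.exp_le_exp.2 (by linarith)
      _ = Real.exp (1 / 2) ^ k := Real.exp_nat_mul _ _
      _ ≤ _ := by gcongr
  refine le_trans (Real.exp_le_exp.2 ?_)
    (two_log_lower_bound k hk18 h l hl hhl (by linarith))
  linarith

/-! ### Tribonacci numbers -/

theorem T_pos_mono : ∀ n, T n ≤ T (n + 1) ∧ 0 ≤ T n := by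
  intro n
  induction n using Nat.strong_induction_on with
  | _ n ih =>
    match n with
    | 0 => decide
    | 1 => decide
    | 2 => decide
    | n + 3 =>
      have h1 := (ih (n + 1) (by omega)).2
      have h2 := (ih (n + 2) (by omega)).2
      have h3 := (ih n (by omega)).2
      rw [show T (n + 3 + 1) = T (n + 3) + T (n + 2) + T (n + 1) from rfl,
        show T (n + 3) = T (n + 2) + T (n + 1) + T n from rfl]
      omega

theorem T_mono : Monotone T := monotone_nat_of_le_succ fun n => (T_pos_mono n).1

theorem T_le_pow {α : ℝ} (hα : α ^ 3 = α ^ 2 + α + 1) (hα1 : 1.83 < α) :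
    ∀ n, (T n : ℝ) ≤ α ^ n := by
  intro n
  induction n using Nat.strong_induction_on with
  | _ n ih =>
    match n with
    | 0 => simp [T]
    | 1 => simp [T]; linarith
    | 2 =>
      have : (T 2 : ℝ) = 1 := by simp [T]
      rw [this]; nlinarith
    | n + 3 =>
      have h1 := ih (n + 1) (by omega)
      have h2 := ih (n + 2) (by omega)
      have h3 := ih n (by omega)
      rw [show T (n + 3) = T (n + 2) + T (n + 1) + T n from rfl]
      push_cast
      have : α ^ (n + 3) = α ^ (n + 2) + α ^ (n + 1) + α ^ n := by
        linear_combination α ^ n * hα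
      linarith

theorem pow_le_T {α : ℝ} (hα : α ^ 3 = α ^ 2 + α + 1) (hα1 : 1.83 < α) (hα2 : α < 1.84) :
    ∀ n, α ^ n ≤ (T (n + 2) : ℝ) := by
  intro n
  induction n using Nat.strong_induction_on with
  | _ n ih =>
    match n with
    | 0 => simp [T]
    | 1 => simp [T]; linarith
    | 2 => simp [T]; nlinarith
    | n + 3 =>
      have h1 := ih (n + 1) (by omega)
      have h2 := ih (n + 2) (by omega)
      have h3 := ih n (by omega)
      rw [show T (n + 3 + 2) = T (n + 2 + 2) + T (n + 1 + 2) + T (n + 2) from rfl]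
      push_cast
      have : α ^ (n + 3) = α ^ (n + 2) + α ^ (n + 1) + α ^ n := by
        linear_combination α ^ n * hα
      linarith

/-- `T n - T n₁ ≥ T n - T (n-1) ≥ T (n-2) ≥ α ^ (n-4)`, and `0.08 * α ^ 4 < 1`. -/
theorem lower_bound {α : ℝ} (hα : α ^ 3 = α ^ 2 + α + 1)
    (hα1 : 1.83 < α) (hα2 : α < 1.84) {n n₁ : ℕ} (hn : 310 < n) (hnn : n₁ < n) :
    0.08 * α ^ n < (T n : ℝ) - T n₁ := by
  obtain ⟨m, rfl⟩ : ∃ m, n = m + 4 := ⟨n - 4, by omega⟩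
  have h1 : T n₁ ≤ T (m + 3) := T_mono (by omega)
  have h2 : T (m + 4) = T (m + 3) + T (m + 2) + T (m + 1) := rfl
  have h3 := (T_pos_mono (m + 1)).2
  have h4 := pow_le_T hα hα1 hα2 m
  have h5 : (T (m + 2) : ℝ) ≤ (T (m + 4) : ℝ) - T n₁ := by
    have : T (m + 2) ≤ T (m + 4) - T n₁ := by omega
    exact_mod_cast this
  have h6 : α ^ 4 < 12 := by
    have : α ^ 4 < 1.84 ^ 4 := by gcongr
    refine this.trans (by norm_num)
  have h7 : 0 < α ^ m := by positivity
  rw [pow_add]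
  calc 0.08 * (α ^ m * α ^ 4) = α ^ m * (0.08 * α ^ 4) := by ring
    _ < α ^ m * 1 := by gcongr; linarith
    _ ≤ _ := by rw [mul_one]; exact h4.trans h5

/-! ### Size of the S-unit part -/

/-- The numerical step that makes the two bounds for the linear form incompatible. The logarithm
is linearised at `200 N`, by `log (12 X) ≤ log (200 N) + 12 X / (200 N) - 1`. -/
theorem log_upper_bound {N X L : ℝ} (hN : 186 ≤ N) (hL : L = Real.log N) (hL5 : 5 ≤ L)
    (hX : N + 60 * L ^ 2 ≤ X) : N + 62 * Real.log (12 * X) + 32 < X := by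
  have hX0 : 0 < X := by nlinarith
  have h1 : Real.log (12 * X) = L + Real.log (12 * X / (200 * N)) + Real.log 200 := by
    rw [hL, ← Real.log_mul (by positivity) (by positivity),
      ← Real.log_mul (by positivity) (by positivity)]
    congr 1
    field_simp
  have h2 : Real.log (12 * X / (200 * N)) ≤ 12 * X / (200 * N) - 1 :=
    Real.log_le_sub_one_of_pos (by positivity)
  have h3 : Real.log 200 ≤ 5.4 := by
    have e : (200 : ℝ) = 2 ^ 8 * (25 / 32) := by norm_num
    rw [e, Real.log_mul (by norm_num) (by norm_num), Real.log_pow]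
    have := Real.log_two_lt_d9
    have : Real.log (25 / 32) ≤ 25 / 32 - 1 := Real.log_le_sub_one_of_pos (by norm_num)
    push_cast
    linarith
  -- `X (1 - 3.72 / N)` is bounded below by its value at `X = N + 60 L²`
  have h4 : X * (1 - 3.72 / N) ≥ (N + 60 * L ^ 2) * (1 - 3.72 / N) := by
    have : 3.72 / N ≤ 1 := by rw [div_le_one (by linarith)]; linarith
    have : 0 ≤ 1 - 3.72 / N := by linarith
    gcongr
  have h5 : (N + 60 * L ^ 2) * (1 - 3.72 / N) = N - 3.72 + 60 * L ^ 2 - 223.2 / N * L ^ 2 := by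
    field_simp
    ring
  have h6 : 223.2 / N ≤ 2 := by rw [div_le_iff₀ (by linarith)]; linarith
  have h7 : 223.2 / N * L ^ 2 ≤ 2 * L ^ 2 := by gcongr
  have h8 : 62 * (12 * X / (200 * N)) = X * (3.72 / N) := by
    field_simp
    ring
  nlinarith

theorem size_of_S_unit_part (α : ℝ) (hα : α ^ 3 = α ^ 2 + α + 1)
    (hα1 : 1.83 < α) (hα2 : α < 1.84)
    (n n₁ x x₁ y y₁ : ℕ) (hn : 310 < n) (hnn : n₁ < n)
    (h : T n - 2 ^ x * 3 ^ y = T n₁ - 2 ^ x₁ * 3 ^ y₁) :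
    (0.08 * α ^ n < (2 ^ x * 3 ^ y : ℝ) ∧
        (2 ^ x * 3 ^ y : ℝ) <
          α ^ n * ((n : ℝ) * Real.log α) ^ (60 * Real.log ((n : ℝ) * Real.log α))) ∧
      ((n : ℝ) * Real.log α - 3 < (x : ℝ) * Real.log 2 + (y : ℝ) * Real.log 3 ∧
        (x : ℝ) * Real.log 2 + (y : ℝ) * Real.log 3 <
          (n : ℝ) * Real.log α + 60 * Real.log ((n : ℝ) * Real.log α) ^ 2) := by
  have hα0 : 0 < α := by linarith
  have hR : (T n : ℝ) - 2 ^ x * 3 ^ y = T n₁ - 2 ^ x₁ * 3 ^ y₁ := by exact_mod_cast h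
  have hlogu : ∀ a b : ℕ, Real.log (2 ^ a * 3 ^ b) = a * Real.log 2 + b * Real.log 3 := by
    intro a b
    rw [Real.log_mul (by positivity) (by positivity), Real.log_pow, Real.log_pow]
  rw [← hlogu x y]
  have hlu := hlogu x y
  have hlv := hlogu x₁ y₁
  have hl2 : 0 < Real.log 2 := Real.log_pos (by norm_num)
  have hl3 : 0 < Real.log 3 := Real.log_pos (by norm_num)
  have hu0 : (0 : ℝ) < 2 ^ x * 3 ^ y := by positivity
  have hv0 : (0 : ℝ) < 2 ^ x₁ * 3 ^ y₁ := by positivity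
  generalize (2 ^ x * 3 ^ y : ℝ) = u at *
  generalize (2 ^ x₁ * 3 ^ y₁ : ℝ) = v at *
  have hlow := lower_bound hα hα1 hα2 hn hnn
  have hup : u - v ≤ α ^ n := by
    have h1 := T_le_pow hα hα1 n
    have h2 : (0 : ℝ) ≤ T n₁ := by exact_mod_cast (T_pos_mono n₁).2
    linarith
  have hulow : 0.08 * α ^ n < u := by linarith
  have hlogα : 0.6 ≤ Real.log α := by
    have e : Real.exp 0.6 ^ 5 = Real.exp 1 ^ 3 := by
      rw [← Real.exp_nat_mul, ← Real.exp_nat_mul]; norm_num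
    rw [Real.le_log_iff_exp_le hα0]
    refine le_trans ?_ hα1.le
    refine le_of_pow_le_pow_left₀ (n := 5) (by norm_num) (by norm_num) ?_
    rw [e]
    exact (pow_le_pow_left₀ (Real.exp_pos 1).le Real.exp_one_lt_d9.le 3).trans (by norm_num)
  have hN : 186 ≤ (n : ℝ) * Real.log α := by
    have : (311 : ℝ) ≤ n := by exact_mod_cast hn
    nlinarith only [this, hlogα]
  have hαexp : α ^ n = Real.exp (n * Real.log α) := by
    rw [Real.exp_nat_mul, Real.exp_log hα0]
  rw [hαexp] at hlow hup hulow ⊢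
  set N := (n : ℝ) * Real.log α
  set L := Real.log N with hL
  set X := Real.log u with hX
  have huX : u = Real.exp X := (Real.exp_log hu0).symm
  have hL5 : 5 ≤ L := by
    rw [hL, Real.le_log_iff_exp_le (by linarith)]
    have : Real.exp 5 = Real.exp 1 ^ 5 := by rw [← Real.exp_nat_mul]; norm_num
    rw [this]
    refine (pow_le_pow_left₀ (Real.exp_pos 1).le Real.exp_one_lt_d9.le 5).trans ?_
    exact le_trans (by norm_num) hN
  have hmain : X < N + 60 * L ^ 2 := by
    by_contra! hcon
    have hbig := log_upper_bound hN hL hL5 hcon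
    have hL25 : 25 ≤ L ^ 2 := by nlinarith only [hL5]
    have hX1000 : 1000 ≤ X := by linarith
    have hvu : v < u := by linarith [Real.exp_pos N]
    have hlvu : Real.log v < X := Real.log_lt_log hv0 hvu
    have hx0 : (0 : ℝ) ≤ x * Real.log 2 := by positivity
    have hy0 : (0 : ℝ) ≤ y * Real.log 3 := by positivity
    have hx10 : (0 : ℝ) ≤ x₁ * Real.log 2 := by positivity
    have hy10 : (0 : ℝ) ≤ y₁ * Real.log 3 := by positivity
    have hΛ : (((x : ℤ) - x₁ : ℤ) : ℝ) * Real.log 2 + (((y : ℤ) - y₁ : ℤ) : ℝ) * Real.log 3 =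
        X - Real.log v := by
      rw [hlu, hlv]; push_cast; ring
    have hlb := log_two_log_three_lower_bound hX1000 ((x : ℤ) - x₁) ((y : ℤ) - y₁)
      (by
        rw [← abs_of_pos hl2, ← abs_mul, abs_le]
        push_cast
        constructor <;> linarith)
      (by
        rw [← abs_of_pos hl3, ← abs_mul, abs_le]
        push_cast
        constructor <;> linarith)
      (by rw [hΛ]; linarith)
    rw [hΛ, abs_of_pos (by linarith)] at hlb
    -- `v ≥ u / 2`, hence `log (u / v) ≤ (u - v) / v ≤ 2 (u - v) / u`
    have hexp1 : Real.exp N * 2 ≤ u := by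
      have h2 : (2 : ℝ) ≤ Real.exp 1 := by linarith [Real.exp_one_gt_d9]
      calc Real.exp N * 2 ≤ Real.exp N * Real.exp 1 := by gcongr
        _ = Real.exp (N + 1) := (Real.exp_add _ _).symm
        _ ≤ u := by rw [huX]; exact Real.exp_le_exp.2 (by linarith)
    have h1 : X - Real.log v ≤ u / v - 1 := by
      rw [hX, ← Real.log_div hu0.ne' hv0.ne']
      exact Real.log_le_sub_one_of_pos (by positivity)
    have h2 : u / v - 1 ≤ 2 * Real.exp (N - X) := by
      rw [Real.exp_sub, ← huX, div_sub_one hv0.ne', ← mul_div_assoc,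
        div_le_div_iff₀ hv0 hu0]
      calc (u - v) * u ≤ Real.exp N * (2 * v) :=
            mul_le_mul hup (by linarith) hu0.le (Real.exp_pos N).le
        _ = 2 * Real.exp N * v := by ring
    have h3 : 2 * Real.exp (N - X) ≤ Real.exp (N - X + 1) := by
      rw [Real.exp_add, mul_comm]
      gcongr
      linarith [Real.exp_one_gt_d9]
    have h4 := Real.exp_le_exp.1 (hlb.trans (h1.trans (h2.trans h3)))
    linarith
  refine ⟨⟨hulow, ?_⟩, ?_, hmain⟩
  · rw [Real.rpow_def_of_pos (by linarith), ← Real.exp_add, huX]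
    refine Real.exp_lt_exp.2 (hmain.trans_eq ?_)
    rw [← hL]; ring
  · rw [hX, Real.lt_log_iff_exp_lt hu0]
    refine lt_of_le_of_lt ?_ hulow
    rw [Real.exp_sub, div_le_iff₀ (Real.exp_pos 3)]
    have : Real.exp 3 = Real.exp 1 ^ 3 := by rw [← Real.exp_nat_mul]; norm_num
    have h2 : (2.7 : ℝ) ^ 3 ≤ Real.exp 1 ^ 3 :=
      pow_le_pow_left₀ (by norm_num) (by linarith [Real.exp_one_gt_d9]) 3
    rw [this]
    calc Real.exp N = 0.08 * Real.exp N * 12.5 := by ring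
      _ ≤ _ := by gcongr; exact le_trans (by norm_num) h2
end
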